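/- arXiv:2411.15230 — 8 statements merged into one kernel-verified Lean document; each statement's English description precedes it below -/
import Mathlib

section
/- Let n ≥ 1 and let C : [0,1]^n → {0,1} be a collaboration strategy. If C is reliable (i.e., acc_C(S) ≥ min_{i∈[n]} acc_i(S) for every collaboration setting S), then C is non-collaborative: there exist k ∈ [n] and α ∈ {0,1} such that for every (p_1, …, p_n) ∈ (0,1)^n, C(p_1, …, p_n) = round(p_k) when p_k ≠ 1/2, and C(p_1, …, p_n) = α when p_k = 1/2. -/
open Finset

noncomputable def rnd (p : ℝ) : Bool := if (1/2 : ℝ) ≤ p then true else false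

structure CollabSetting (n : ℕ) where
  X : Type
  [finX : Fintype X]
  D : X × Bool → ℝ
  D_nonneg : ∀ z, 0 ≤ D z
  D_sum_one : ∑ z : X × Bool, D z = 1
  P : Fin n → X → ℝ
  P_mem : ∀ i x, 0 ≤ P i x ∧ P i x ≤ 1
  calibrated : ∀ (i : Fin n) (p : ℝ),
      0 < (∑ z : X × Bool, if P i z.1 = p then D z else 0) →
      (∑ z : X × Bool, if P i z.1 = p ∧ z.2 = true then D z else 0)
        = p * (∑ z : X × Bool, if P i z.1 = p then D z else 0)

attribute [instance] CollabSetting.finX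

noncomputable def acc {n : ℕ} (S : CollabSetting n) (Yhat : S.X → Bool) : ℝ :=
  ∑ z : S.X × Bool, if Yhat z.1 = z.2 then S.D z else 0

noncomputable def accAgent {n : ℕ} (S : CollabSetting n) (i : Fin n) : ℝ :=
  acc S (fun x => rnd (S.P i x))

noncomputable def accStrat {n : ℕ} (S : CollabSetting n) (C : (Fin n → ℝ) → Bool) : ℝ :=
  acc S (fun x => C (fun i => S.P i x))

/-!
Suppose a strategy `C` errs on a finite family of profiles `p j` in the open cube, each given the
label `y j ≠ C (p j)`. Put unit mass on every profile, and restore the calibration of agent `i` at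
`p j` by points with the opposite label on which agent `i` repeats its prediction and all other
agents predict perfectly. At `p j`, agent `i` is then charged `1` if it disagrees with `y j`;
otherwise it is charged the compensating mass, which is at most `1`, and less than `1` unless
`p j i = 1/2`. Since `C` is charged at least `1` for every `j`, reliability yields an agent that is
charged exactly `1` for every `j`.

If for every agent `j` the strategy deviated from `rnd (p j j)` at some `p j` with `p j j ≠ 1/2`,
the labels `rnd (p j j)` would leave no such agent; so the strategy follows some agent `k` off ties.
If it took both values on ties of agent `k`, two such ties would get opposite labels and calibrate
agent `k` without any compensating mass, so that `k` is charged `0` at one of them; a third profile,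
on which the strategy follows `k` against all others, excludes the other agents.
-/

/-- Reliability of a collaboration strategy: it is at least as accurate as the worst agent in every
collaboration setting. -/
def IsReliable {n : ℕ} (C : (Fin n → ℝ) → Bool) : Prop :=
  ∀ S : CollabSetting n, (⨅ i : Fin n, accAgent S i) ≤ accStrat S C

lemma rnd_toNat (b : Bool) : rnd (b.toNat : ℝ) = b := by
  cases b <;> norm_num [rnd]

/-- A collaboration setting with deterministic labels and unnormalised masses. Calibration is
expressed by the vanishing of the total residual on every level set of a predictor. -/
structure LabelledSample (n : ℕ) where
  X : Type
  [fintypeX : Fintype X]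
  weight : X → ℝ
  label : X → Bool
  pred : Fin n → X → ℝ
  weight_nonneg : ∀ x, 0 ≤ weight x
  total_pos : 0 < ∑ x, weight x
  pred_mem : ∀ i x, pred i x ∈ Set.Icc (0 : ℝ) 1
  calibrated : ∀ i v, ∑ x, (if pred i x = v then weight x * ((label x).toNat - v) else 0) = 0

namespace LabelledSample

attribute [instance] fintypeX

variable {n : ℕ} (S : LabelledSample n)

/-- The joint distribution of points and labels obtained by normalising the weights. -/
noncomputable def prob (z : S.X × Bool) : ℝ :=
  if z.2 = S.label z.1 then S.weight z.1 / ∑ x, S.weight x else 0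

/-- The mass of the points misclassified by a classifier. -/
noncomputable def errorMass (f : S.X → Bool) : ℝ :=
  ∑ x, if f x ≠ S.label x then S.weight x else 0

lemma sum_prob (A : S.X × Bool → Prop) [DecidablePred A] :
    ∑ z, (if A z then S.prob z else 0) =
      (∑ x, if A (x, S.label x) then S.weight x else 0) / ∑ x, S.weight x := by
  rw [Fintype.sum_prod_type, Finset.sum_div]
  refine Finset.sum_congr rfl fun x _ => ?_
  rw [Fintype.sum_eq_single (S.label x) fun b hb => by simp [prob, hb]]
  simp [prob, ite_div]

/-- The collaboration setting represented by a labelled sample. -/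
noncomputable def toSetting : CollabSetting n where
  X := S.X
  D := S.prob
  D_nonneg z := by
    unfold prob
    split_ifs
    exacts [div_nonneg (S.weight_nonneg _) S.total_pos.le, le_rfl]
  D_sum_one := by simpa [S.total_pos.ne'] using S.sum_prob fun _ => True
  P := S.pred
  P_mem := S.pred_mem
  calibrated i v _ := by
    rw [S.sum_prob, S.sum_prob, ← mul_div_assoc]
    congr 1
    rw [← sub_eq_zero, Finset.mul_sum, ← Finset.sum_sub_distrib]
    refine (Finset.sum_congr rfl fun x _ => ?_).trans (S.calibrated i v)
    by_cases hx : S.pred i x = v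
    · cases S.label x <;> simp only [hx, true_and, if_true, Bool.false_eq_true, if_false,
        Bool.toNat_true, Bool.toNat_false, Nat.cast_zero, Nat.cast_one] <;> ring
    · simp [hx]

lemma acc_toSetting (f : S.X → Bool) :
    acc S.toSetting f = 1 - S.errorMass f / ∑ x, S.weight x := by
  have correctMass_eq :
      (∑ x, if f x = S.label x then S.weight x else 0) = ∑ x, S.weight x - S.errorMass f := by
    rw [errorMass, ← Finset.sum_sub_distrib]
    refine Finset.sum_congr rfl fun x _ => ?_
    by_cases h : f x = S.label x <;> simp [h]
  calc acc S.toSetting f = (∑ x, if f x = S.label x then S.weight x else 0) / ∑ x, S.weight x :=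
        S.sum_prob fun z => f z.1 = z.2
    _ = 1 - S.errorMass f / ∑ x, S.weight x := by
        rw [correctMass_eq, sub_div, div_self S.total_pos.ne']

lemma exists_agent_errorMass_ge [Nonempty (Fin n)] {C : (Fin n → ℝ) → Bool} (hC : IsReliable C) :
    ∃ i, S.errorMass (fun x => C fun i => S.pred i x) ≤ S.errorMass fun x => rnd (S.pred i x) := by
  obtain ⟨i, hi⟩ := exists_eq_ciInf_of_finite (f := accAgent S.toSetting)
  have acc_le :=
    calc 1 - S.errorMass (fun x => rnd (S.pred i x)) / ∑ x, S.weight x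
      _ = accAgent S.toSetting i := (S.acc_toSetting _).symm
      _ = ⨅ i, accAgent S.toSetting i := hi
      _ ≤ accStrat S.toSetting C := hC _
      _ = 1 - S.errorMass (fun x => C fun i => S.pred i x) / ∑ x, S.weight x := S.acc_toSetting _
  rw [sub_le_sub_iff_left, div_le_div_iff_of_pos_right S.total_pos] at acc_le
  exact ⟨i, acc_le⟩

end LabelledSample

/-- The mass with label `!b` that calibrates the prediction `p` on a unit mass with label `b`. -/
noncomputable def counterMass : Bool → ℝ → ℝ
  | true, p => (1 - p) / p
  | false, p => p / (1 - p)

lemma counterMass_nonneg (b : Bool) {p : ℝ} (hp : p ∈ Set.Icc (0 : ℝ) 1) : 0 ≤ counterMass b p := by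
  cases b
  exacts [div_nonneg hp.1 (sub_nonneg.2 hp.2), div_nonneg (sub_nonneg.2 hp.2) hp.1]

lemma counterMass_calibrates (b : Bool) {p : ℝ} (hp : p ∈ Set.Ioo (0 : ℝ) 1) (v : ℝ) :
    (if p = v then ((b.toNat : ℝ) - v) + counterMass b p * ((!b).toNat - v) else 0) = 0 := by
  rw [ite_eq_right_iff]
  rintro rfl
  have hp₀ : p ≠ 0 := hp.1.ne'
  have hp₁ : 1 - p ≠ 0 := (sub_pos.2 hp.2).ne'
  cases b <;> simp only [counterMass, Bool.toNat_true, Bool.toNat_false, Bool.not_true,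
    Bool.not_false, Nat.cast_zero, Nat.cast_one] <;> field_simp <;> ring

lemma counterMass_rnd_le_one (p : ℝ) : counterMass (rnd p) p ≤ 1 := by
  by_cases h : 1 / 2 ≤ p
  · simp only [rnd, h, if_true, counterMass]
    rw [div_le_one (by linarith)]
    linarith
  · simp only [rnd, h, if_false, counterMass]
    rw [div_le_one (by linarith)]
    linarith

lemma counterMass_rnd_lt_one {p : ℝ} (hp : p ≠ 1 / 2) : counterMass (rnd p) p < 1 := by
  rcases hp.lt_or_gt with h | h
  · simp only [rnd, h.not_ge, if_false, counterMass]
    rw [div_lt_one (by linarith)]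
    linarith
  · simp only [rnd, h.le, if_true, counterMass]
    rw [div_lt_one (by linarith)]
    linarith

/-- A finite family of labelled prediction profiles of unit mass, together with the mass
`compensation j i` of the oppositely labelled points on which agent `i` repeats its prediction
`profile j i`, chosen so that every agent is calibrated. -/
structure CompensatedFamily (n : ℕ) (J : Type) [Fintype J] where
  profile : J → Fin n → ℝ
  label : J → Bool
  compensation : J → Fin n → ℝ
  profile_mem : ∀ j i, profile j i ∈ Set.Icc (0 : ℝ) 1
  compensation_nonneg : ∀ j i, 0 ≤ compensation j i
  compensation_le : ∀ j i, compensation j i ≤ counterMass (label j) (profile j i)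
  calibrated : ∀ i v, ∑ j, (if profile j i = v then
    ((label j).toNat - v) + compensation j i * ((!label j).toNat - v) else 0) = 0

namespace CompensatedFamily

variable {n : ℕ} {J : Type} [Fintype J] (F : CompensatedFamily n J)

/-- The weights of the sample of a compensated family: `(j, none)` stands for the `j`-th profile,
and `(j, some i)` for the points that compensate agent `i` there. -/
def weight : J × Option (Fin n) → ℝ
  | (_, none) => 1
  | (j, some i) => F.compensation j i

/-- The labels of the sample of a compensated family. -/
def sampleLabel : J × Option (Fin n) → Bool
  | (j, none) => F.label j
  | (j, some _) => !F.label j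

/-- The predictions on the sample of a compensated family: on the points that compensate another
agent, the prediction is perfect. -/
def pred (i : Fin n) : J × Option (Fin n) → ℝ
  | (j, none) => F.profile j i
  | (j, some i') => if i' = i then F.profile j i else (!F.label j).toNat

lemma weight_nonneg : ∀ x, 0 ≤ F.weight x
  | (_, none) => zero_le_one
  | (j, some i) => F.compensation_nonneg j i

lemma pred_mem (i : Fin n) : ∀ x, F.pred i x ∈ Set.Icc (0 : ℝ) 1
  | (j, none) => F.profile_mem j i
  | (j, some i') => by
    dsimp only [pred]
    split_ifs
    · exact F.profile_mem j i
    · cases F.label j <;> simp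

lemma sum_residual_pred (i : Fin n) (v : ℝ) :
    ∑ x, (if F.pred i x = v then F.weight x * ((F.sampleLabel x).toNat - v) else 0) = 0 := by
  rw [Fintype.sum_prod_type]
  refine (Finset.sum_congr rfl fun j _ => ?_).trans (F.calibrated i v)
  have perfect_residual (i' : Fin n) (hi' : i' ≠ i) :
      (if F.pred i (j, some i') = v then
        F.weight (j, some i') * ((F.sampleLabel (j, some i')).toNat - v) else 0) = 0 := by
    simp only [pred, hi', if_false, sampleLabel, ite_eq_right_iff]
    rintro rfl
    rw [sub_self, mul_zero]
  rw [Fintype.sum_option, Fintype.sum_eq_single i perfect_residual]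
  by_cases h : F.profile j i = v <;> simp [pred, weight, sampleLabel, h]

/-- The labelled sample formed by the profiles and the compensating points. -/
def toSample [Nonempty J] : LabelledSample n where
  X := J × Option (Fin n)
  weight := F.weight
  label := F.sampleLabel
  pred := F.pred
  weight_nonneg := F.weight_nonneg
  total_pos := by
    inhabit J
    exact Finset.sum_pos' (fun x _ => F.weight_nonneg x)
      ⟨(default, none), Finset.mem_univ _, zero_lt_one⟩
  pred_mem := F.pred_mem
  calibrated := F.sum_residual_pred

/-- The error mass of agent `i` at the `j`-th profile and its compensating points. -/
noncomputable def agentError (i : Fin n) (j : J) : ℝ :=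
  if rnd (F.profile j i) = F.label j then F.compensation j i else 1

lemma agentError_le_one (i : Fin n) (j : J) : F.agentError i j ≤ 1 := by
  unfold agentError
  split_ifs with h
  · exact (F.compensation_le j i).trans (h ▸ counterMass_rnd_le_one _)
  · exact le_rfl

lemma errorMass_agent [Nonempty J] (i : Fin n) :
    F.toSample.errorMass (fun x => rnd (F.pred i x)) = ∑ j, F.agentError i j := by
  refine (Fintype.sum_prod_type _).trans (Finset.sum_congr rfl fun j _ => ?_)
  have perfect_error (i' : Fin n) (hi' : i' ≠ i) :
      (if rnd (F.pred i (j, some i')) ≠ !F.label j then F.compensation j i' else 0) = 0 := by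
    simp [pred, hi', rnd_toNat]
  calc
    _ = (if rnd (F.profile j i) ≠ F.label j then (1 : ℝ) else 0) +
          ∑ i', if rnd (F.pred i (j, some i')) ≠ !F.label j then F.compensation j i' else 0 :=
        Fintype.sum_option _
    _ = F.agentError i j := by
        rw [Fintype.sum_eq_single i perfect_error]
        by_cases h : rnd (F.profile j i) = F.label j <;> simp [pred, agentError, h]

lemma card_le_errorMass [Nonempty J] {C : (Fin n → ℝ) → Bool}
    (hCF : ∀ j, C (F.profile j) ≠ F.label j) :
    (Fintype.card J : ℝ) ≤ F.toSample.errorMass fun x => C fun i => F.pred i x := by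
  let loss (x : J × Option (Fin n)) : ℝ :=
    if (C fun i => F.pred i x) ≠ F.sampleLabel x then F.weight x else 0
  have loss_nonneg (x) : 0 ≤ loss x := ite_nonneg (F.weight_nonneg x) le_rfl
  calc (Fintype.card J : ℝ) = ∑ j, loss (j, none) := by
        simp [loss, pred, sampleLabel, weight, hCF]
    _ ≤ ∑ j, ∑ o, loss (j, o) := Finset.sum_le_sum fun j _ =>
        Finset.single_le_sum (fun o _ => loss_nonneg (j, o)) (Finset.mem_univ none)
    _ = ∑ x, loss x := (Fintype.sum_prod_type _).symm

lemma exists_agent_compensation_eq_one [Nonempty (Fin n)] [Nonempty J] {C : (Fin n → ℝ) → Bool}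
    (hC : IsReliable C) (hCF : ∀ j, C (F.profile j) ≠ F.label j) :
    ∃ i, ∀ j, rnd (F.profile j i) = F.label j → F.compensation j i = 1 := by
  obtain ⟨i, hi⟩ := F.toSample.exists_agent_errorMass_ge hC
  have card_le : ∑ _j : J, (1 : ℝ) ≤ ∑ j, F.agentError i j := by
    simpa using (F.card_le_errorMass hCF).trans (hi.trans_eq (F.errorMass_agent i))
  have error_le (j) (_ : j ∈ univ) : F.agentError i j ≤ 1 := F.agentError_le_one i j
  have error_eq := (Finset.sum_eq_sum_iff_of_le error_le).1
    ((Finset.sum_le_sum error_le).antisymm card_le)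
  exact ⟨i, fun j hj => by simpa [agentError, hj] using error_eq j (mem_univ j)⟩

/-- The family in which every agent is compensated separately at each profile. -/
noncomputable def ofProfiles (p : J → Fin n → ℝ) (y : J → Bool)
    (hp : ∀ j i, p j i ∈ Set.Ioo (0 : ℝ) 1) : CompensatedFamily n J where
  profile := p
  label := y
  compensation j i := counterMass (y j) (p j i)
  profile_mem j i := Set.Ioo_subset_Icc_self (hp j i)
  compensation_nonneg j i := counterMass_nonneg _ (Set.Ioo_subset_Icc_self (hp j i))
  compensation_le _ _ := le_rfl
  calibrated i v := Finset.sum_eq_zero fun j _ => counterMass_calibrates _ (hp j i) v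

end CompensatedFamily

lemma IsReliable.exists_followed_agent {n : ℕ} [Nonempty (Fin n)] {C : (Fin n → ℝ) → Bool}
    (hC : IsReliable C) :
    ∃ k : Fin n, ∀ p : Fin n → ℝ, (∀ i, p i ∈ Set.Ioo (0 : ℝ) 1) → p k ≠ 1 / 2 →
      C p = rnd (p k) := by
  by_contra! h
  choose p hp hne hCp using h
  obtain ⟨i, hi⟩ := (CompensatedFamily.ofProfiles p (fun j => rnd (p j j)) hp)
    |>.exists_agent_compensation_eq_one hC hCp
  exact (counterMass_rnd_lt_one (hne i)).ne (hi i rfl)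

/-- The profile on which agent `k` leans towards `true` and every other agent towards `false`. -/
noncomputable def dissentProfile {n : ℕ} (k i : Fin n) : ℝ := if i = k then 2 / 3 else 1 / 3

lemma dissentProfile_mem {n : ℕ} (k i : Fin n) : dissentProfile k i ∈ Set.Ioo (0 : ℝ) 1 := by
  unfold dissentProfile
  split_ifs <;> norm_num

lemma sum_tie_residual {n : ℕ} {k : Fin n} {P : Bool → Fin n → ℝ}
    (hP : ∀ b i, P b i ∈ Set.Ioo (0 : ℝ) 1) (hk : ∀ b, P b k = 1 / 2) (i : Fin n) (v : ℝ) :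
    ∑ b, (if P b i = v then ((b.toNat : ℝ) - v) +
      (if i = k then 0 else counterMass b (P b i)) * ((!b).toNat - v) else 0) = 0 := by
  rcases eq_or_ne i k with rfl | hik
  · rw [Fintype.sum_bool, hk, hk]
    by_cases hv : 1 / 2 = v
    · norm_num [← hv]
    · simp only [hv, if_false, add_zero]
  · simp only [hik, if_false, counterMass_calibrates _ (hP _ i), Finset.sum_const_zero]

/-- Two oppositely labelled ties `P b` of agent `k`, indexed by `some b`, and the dissent profile of
`k` with label `false`, indexed by `none`. The ties balance each other for agent `k`, who needs no
compensation there. -/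
noncomputable def CompensatedFamily.ofTies {n : ℕ} (k : Fin n) (P : Bool → Fin n → ℝ)
    (hP : ∀ b i, P b i ∈ Set.Ioo (0 : ℝ) 1) (hk : ∀ b, P b k = 1 / 2) :
    CompensatedFamily n (Option Bool) where
  profile j := j.elim (dissentProfile k) P
  label j := j.elim false id
  compensation j i := j.elim (counterMass false (dissentProfile k i))
    fun b => if i = k then 0 else counterMass b (P b i)
  profile_mem
    | none, i => Set.Ioo_subset_Icc_self (dissentProfile_mem k i)
    | some b, i => Set.Ioo_subset_Icc_self (hP b i)
  compensation_nonneg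
    | none, i => counterMass_nonneg false (Set.Ioo_subset_Icc_self (dissentProfile_mem k i))
    | some b, i => ite_nonneg le_rfl (counterMass_nonneg _ (Set.Ioo_subset_Icc_self (hP b i)))
  compensation_le
    | none, _ => le_rfl
    | some b, i => by
      dsimp only [Option.elim]
      split_ifs
      exacts [counterMass_nonneg _ (Set.Ioo_subset_Icc_self (hP b i)), le_rfl]
  calibrated i v := (Fintype.sum_option _).trans <| (congrArg₂ (· + ·)
    (counterMass_calibrates false (dissentProfile_mem k i) v)
    (sum_tie_residual hP hk i v)).trans (add_zero 0)

lemma IsReliable.exists_tie_value {n : ℕ} {C : (Fin n → ℝ) → Bool} (hC : IsReliable C) {k : Fin n}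
    (hk : ∀ p : Fin n → ℝ, (∀ i, p i ∈ Set.Ioo (0 : ℝ) 1) → p k ≠ 1 / 2 → C p = rnd (p k)) :
    ∃ α, ∀ p : Fin n → ℝ, (∀ i, p i ∈ Set.Ioo (0 : ℝ) 1) → p k = 1 / 2 → C p = α := by
  by_contra! h
  choose P hP hPk hCP using h
  let F := CompensatedFamily.ofTies k P hP hPk
  have C_dissent : C (dissentProfile k) = true := by
    rw [hk _ (dissentProfile_mem k)] <;> norm_num [dissentProfile, rnd]
  have hCF : ∀ j, C (F.profile j) ≠ F.label j
    | none => by simp [F, CompensatedFamily.ofTies, C_dissent]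
    | some b => hCP b
  have : Nonempty (Fin n) := ⟨k⟩
  obtain ⟨i, hi⟩ := F.exists_agent_compensation_eq_one hC hCF
  rcases eq_or_ne i k with rfl | hik
  · have := hi (some true)
    norm_num [F, CompensatedFamily.ofTies, hPk, rnd] at this
  · have := hi none
    norm_num [F, CompensatedFamily.ofTies, dissentProfile, hik, rnd, counterMass] at this

/-- Every reliable collaboration strategy is non-collaborative. -/
theorem stmt_0 (n : ℕ) (hn : 1 ≤ n) (C : (Fin n → ℝ) → Bool)
    (hreliable : ∀ S : CollabSetting n, (⨅ i : Fin n, accAgent S i) ≤ accStrat S C) :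
    ∃ (k : Fin n) (α : Bool), ∀ p : Fin n → ℝ,
      (∀ i, p i ∈ Set.Ioo (0 : ℝ) 1) →
      (p k ≠ 1/2 → C p = rnd (p k)) ∧ (p k = 1/2 → C p = α) := by
  have : Nonempty (Fin n) := ⟨⟨0, hn⟩⟩
  have hC : IsReliable C := hreliable
  obtain ⟨k, hk⟩ := hC.exists_followed_agent
  obtain ⟨α, hα⟩ := hC.exists_tie_value hk
  exact ⟨k, α, fun p hp => ⟨hk p hp, hα p hp⟩⟩
end

section
/- Let n ≥ 1 and let S_1, …, S_ℓ be collaboration settings, each with n agents. Then for every tuple of nonnegative weights (λ_1, …, λ_ℓ) summing to 1, there exists a collaboration setting S such that acc_i(S) = Σ_{m=1}^ℓ λ_m · acc_i(S_m) for every i ∈ [n], and acc_C(S) = Σ_{m=1}^ℓ λ_m · acc_C(S_m) for every collaboration strategy C : [0,1]^n → {0,1}. -/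
open Finset

/-!
Take the disjoint union of the `X_m` and multiply each `D_m` by `λ_m`. Accuracies, and for a fixed
value `p` of a predictor both sides of the calibration equation, are sums over events or multiples
of them, hence additive over the pieces. The pieces can be added even where some of them give the
value `p` probability zero, because there the equation reads `0 = p * 0`.
-/

section Mixture

variable {ι Y R : Type*} {X : ι → Type*}

/-- The mixture, with weights `w`, of mass functions `D m` on labelled spaces `X m × Y`, as a mass
function on the disjoint union of the `X m`. The points are grouped as `(Σ m, X m) × Y` rather than
`Σ m, X m × Y` so that the label remains the second component. -/
def mixtureMass [Mul R] (w : ι → R) (D : ∀ m, X m × Y → R) :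
    (Σ m, X m) × Y → R :=
  fun z => w z.1.1 * D z.1.1 (z.1.2, z.2)

variable [Fintype ι] [Fintype Y] [∀ m, Fintype (X m)] [NonUnitalNonAssocSemiring R]

theorem sum_mixtureMass (w : ι → R) (D : ∀ m, X m × Y → R) :
    ∑ z, mixtureMass w D z = ∑ m, w m * ∑ z, D m z :=
  calc ∑ z, mixtureMass w D z
      = ∑ z : Σ m, X m × Y, w z.1 * D z.1 z.2 :=
        Fintype.sum_equiv (Equiv.sigmaProdDistrib X Y) _ _ fun _ => rfl
    _ = ∑ m, w m * ∑ z, D m z := by simp only [Fintype.sum_sigma, mul_sum]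

theorem sum_ite_mixtureMass (w : ι → R) (D : ∀ m, X m × Y → R)
    (E : (Σ m, X m) × Y → Prop) [DecidablePred E] :
    (∑ z, if E z then mixtureMass w D z else 0)
      = ∑ m, w m * ∑ z : X m × Y, if E (⟨m, z.1⟩, z.2) then D m z else 0 := by
  rw [← sum_mixtureMass w fun m z => if E (⟨m, z.1⟩, z.2) then D m z else 0]
  simp only [mixtureMass, mul_ite_zero, Prod.mk.eta, Sigma.eta]

end Mixture

theorem sum_ite_le_sum_ite_of_imp {α M : Type*} [Fintype α] [AddCommMonoid M] [PartialOrder M]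
    [IsOrderedAddMonoid M] {f : α → M} (hf : ∀ a, 0 ≤ f a) {p q : α → Prop} [DecidablePred p]
    [DecidablePred q] (hpq : ∀ a, p a → q a) :
    (∑ a, if p a then f a else 0) ≤ ∑ a, if q a then f a else 0 := by
  simp only [← sum_filter]
  exact sum_le_sum_of_subset_of_nonneg (monotone_filter_right _ fun a _ => hpq a) fun a _ _ => hf a

namespace CollabSetting

variable {n : ℕ}

theorem calibrated_at_every_value (S : CollabSetting n) (i : Fin n) (p : ℝ) :
    (∑ z : S.X × Bool, if S.P i z.1 = p ∧ z.2 = true then S.D z else 0)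
      = p * ∑ z : S.X × Bool, if S.P i z.1 = p then S.D z else 0 := by
  have level_nonneg : 0 ≤ ∑ z : S.X × Bool, if S.P i z.1 = p then S.D z else 0 :=
    sum_nonneg fun z _ => ite_nonneg (S.D_nonneg z) le_rfl
  rcases level_nonneg.lt_or_eq with level_pos | level_zero
  · exact S.calibrated i p level_pos
  · have positive_nonneg :
        0 ≤ ∑ z : S.X × Bool, if S.P i z.1 = p ∧ z.2 = true then S.D z else 0 :=
      sum_nonneg fun z _ => ite_nonneg (S.D_nonneg z) le_rfl
    have positive_le_level :
        (∑ z : S.X × Bool, if S.P i z.1 = p ∧ z.2 = true then S.D z else 0)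
          ≤ ∑ z : S.X × Bool, if S.P i z.1 = p then S.D z else 0 :=
      sum_ite_le_sum_ite_of_imp S.D_nonneg fun _ => And.left
    rw [← level_zero] at positive_le_level ⊢
    rw [mul_zero, le_antisymm positive_le_level positive_nonneg]

variable {ι : Type} [Fintype ι] (Ss : ι → CollabSetting n) (w : ι → ℝ) (w_nonneg : ∀ m, 0 ≤ w m)
  (w_sum : ∑ m, w m = 1)

/-- The mixture of the settings `Ss m` with weights `w m`: an index `m` is drawn with probability
`w m`, then a labelled point from `Ss m`, to which the agents apply their predictors of `Ss m`. -/
def mixture : CollabSetting n where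
  X := Σ m, (Ss m).X
  D := mixtureMass w fun m => (Ss m).D
  D_nonneg z := mul_nonneg (w_nonneg z.1.1) ((Ss z.1.1).D_nonneg _)
  D_sum_one := by simp only [sum_mixtureMass, D_sum_one, mul_one, w_sum]
  P i x := (Ss x.1).P i x.2
  P_mem i x := (Ss x.1).P_mem i x.2
  calibrated i p _ := by
    simp only [sum_ite_mixtureMass, calibrated_at_every_value, mul_sum, mul_left_comm p]

theorem acc_mixture (Yhat : (mixture Ss w w_nonneg w_sum).X → Bool) :
    acc (mixture Ss w w_nonneg w_sum) Yhat = ∑ m, w m * acc (Ss m) fun x => Yhat ⟨m, x⟩ :=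
  sum_ite_mixtureMass w (fun m => (Ss m).D) fun z => Yhat z.1 = z.2

theorem accAgent_mixture (i : Fin n) :
    accAgent (mixture Ss w w_nonneg w_sum) i = ∑ m, w m * accAgent (Ss m) i :=
  acc_mixture Ss w w_nonneg w_sum _

theorem accStrat_mixture (C : (Fin n → ℝ) → Bool) :
    accStrat (mixture Ss w w_nonneg w_sum) C = ∑ m, w m * accStrat (Ss m) C :=
  acc_mixture Ss w w_nonneg w_sum _

end CollabSetting

/-- Linear combinations of collaboration settings. -/
theorem stmt_1 (n : ℕ) (hn : 1 ≤ n) (ℓ : ℕ)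
    (Ss : Fin ℓ → CollabSetting n)
    (lam : Fin ℓ → ℝ) (hlam_nonneg : ∀ m, 0 ≤ lam m) (hlam_sum : ∑ m, lam m = 1) :
    ∃ S : CollabSetting n,
      (∀ i : Fin n, accAgent S i = ∑ m, lam m * accAgent (Ss m) i) ∧
      (∀ C : (Fin n → ℝ) → Bool, accStrat S C = ∑ m, lam m * accStrat (Ss m) C) := by
  exact ⟨.mixture Ss lam hlam_nonneg hlam_sum,
    CollabSetting.accAgent_mixture Ss lam hlam_nonneg hlam_sum,
    CollabSetting.accStrat_mixture Ss lam hlam_nonneg hlam_sum⟩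
end

section
/- Let n ≥ 1 and let C : [0,1]^n → {0,1} be a collaboration strategy such that there exists k ∈ [n] with C(p_1, …, p_n) = round(p_k) for every (p_1, …, p_n) ∈ (0,1)^n with p_k ≠ 1/2. If acc_C(S) ≥ min_{i∈[n]} acc_i(S) for every collaboration setting S, then there exists α ∈ {0,1} such that C(p_1, …, p_n) = α for every (p_1, …, p_n) ∈ (0,1)^n with p_k = 1/2. -/
open Finset

/-!
Suppose `C` outputs different labels on two profiles with `p k = 1/2`. Put one unit of mass on each,
with the label that `C` gets wrong: agent `k` stays calibrated there and is right on one of the two.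
The other agents are recalibrated by filler points whose label is nearly certain and which agent `k`
announces correctly, so `C` loses nothing to `k` on them. Finally two bulk regions of opposite label
are told apart by everyone except agent `k`, who pools them under a single prediction above `1/2`.
Deferring to `k` there is costly enough to put `C` below every other agent, while it remains below
agent `k` because of the two initial points.
-/

theorem rnd_of_half_le {p : ℝ} (hp : 1 / 2 ≤ p) : rnd p = true := if_pos hp

theorem rnd_of_lt_half {p : ℝ} (hp : p < 1 / 2) : rnd p = false := if_neg hp.not_ge

/-- The probability that a label which is `true` with probability `μ` equals `b`. Since
`labelProb b` is an involution, `labelProb b q` is also the mean of a label that equals `b` with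
probability `q`. -/
def labelProb (b : Bool) (μ : ℝ) : ℝ := if b then μ else 1 - μ

@[simp] theorem labelProb_true (μ : ℝ) : labelProb true μ = μ := rfl

@[simp] theorem labelProb_false (μ : ℝ) : labelProb false μ = 1 - μ := rfl

@[simp] theorem labelProb_labelProb_self (b : Bool) (μ : ℝ) :
    labelProb b (labelProb b μ) = μ := by
  cases b <;> simp

theorem labelProb_mem_Ioo {μ : ℝ} (hμ : μ ∈ Set.Ioo 0 1) (b : Bool) :
    labelProb b μ ∈ Set.Ioo 0 1 := by
  cases b
  · exact ⟨sub_pos.2 hμ.2, sub_lt_self 1 hμ.1⟩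
  · exact hμ

theorem labelProb_mem_Icc {μ : ℝ} (hμ : μ ∈ Set.Icc 0 1) (b : Bool) :
    labelProb b μ ∈ Set.Icc 0 1 := by
  cases b
  · exact ⟨sub_nonneg.2 hμ.2, sub_le_self 1 hμ.1⟩
  · exact hμ

theorem rnd_labelProb {q : ℝ} (hq : 1 / 2 < q) (b : Bool) : rnd (labelProb b q) = b := by
  cases b
  · exact rnd_of_lt_half (by rw [labelProb_false]; linarith)
  · exact rnd_of_half_le hq.le

theorem labelProb_ne_half {q : ℝ} (hq : 1 / 2 < q) (b : Bool) : labelProb b q ≠ 1 / 2 := by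
  cases b <;> simp only [labelProb_true, labelProb_false] <;> intro h <;> linarith

/-- An unnormalised collaboration setting on a finite set `X`, given by the mass of each point and
the conditional mean of its label. Calibration is tested against arbitrary functions of the
prediction instead of its level sets. -/
structure Population (n : ℕ) (X : Type) [Fintype X] where
  mass : X → ℝ
  mean : X → ℝ
  pred : Fin n → X → ℝ
  mass_nonneg : ∀ x, 0 ≤ mass x
  total_pos : 0 < ∑ x, mass x
  mean_mem : ∀ x, mean x ∈ Set.Icc 0 1
  pred_mem : ∀ i x, pred i x ∈ Set.Icc 0 1
  calibrated : ∀ i (f : ℝ → ℝ), ∑ x, mass x * (mean x - pred i x) * f (pred i x) = 0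

namespace Population

variable {n : ℕ} {X : Type} [Fintype X] (M : Population n X)

/-- The total mass of a population. -/
def total : ℝ := ∑ x, M.mass x

/-- The mass on which the classifier `Y` agrees with the label: its unnormalised accuracy. -/
def score (Y : X → Bool) : ℝ := ∑ x, M.mass x * labelProb (Y x) (M.mean x)

/-- The mass of a point with a given label. -/
def jointMass (z : X × Bool) : ℝ := M.mass z.1 * labelProb z.2 (M.mean z.1)

theorem jointMass_true_add_false (x : X) :
    M.jointMass (x, true) + M.jointMass (x, false) = M.mass x := by
  simp only [jointMass, labelProb_true, labelProb_false]
  ring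

theorem sum_jointMass : ∑ z, M.jointMass z = M.total := by
  simp only [Fintype.sum_prod_type, Fintype.sum_bool, jointMass_true_add_false, total]

theorem sum_jointMass_eq_score (Y : X → Bool) :
    ∑ z : X × Bool, (if Y z.1 = z.2 then M.jointMass z else 0) = M.score Y := by
  rw [Fintype.sum_prod_type]
  simp only [sum_ite_eq, mem_univ, if_true, jointMass, score]

theorem sum_jointMass_level (i : Fin n) (p : ℝ) :
    ∑ z : X × Bool, (if M.pred i z.1 = p ∧ z.2 = true then M.jointMass z else 0)
      = p * ∑ z : X × Bool, if M.pred i z.1 = p then M.jointMass z else 0 := by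
  rw [← sub_eq_zero, mul_sum, ← sum_sub_distrib, Fintype.sum_prod_type]
  refine (sum_congr rfl fun x _ ↦ ?_).trans (M.calibrated i fun v ↦ if v = p then 1 else 0)
  by_cases hx : M.pred i x = p
  · simp only [Fintype.sum_bool, jointMass, hx, labelProb_true, labelProb_false, and_true, if_true,
      Bool.false_eq_true, and_false, if_false]
    ring
  · simp only [hx, false_and, if_false, mul_zero, sub_self, sum_const_zero]

/-- The collaboration setting obtained by normalising the total mass to `1`. -/
noncomputable def toCollabSetting : CollabSetting n where
  X := X
  D z := M.jointMass z / M.total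
  D_nonneg z := div_nonneg (mul_nonneg (M.mass_nonneg _) (labelProb_mem_Icc (M.mean_mem _) _).1)
    M.total_pos.le
  D_sum_one := by
    rw [← sum_div, sum_jointMass]
    exact div_self M.total_pos.ne'
  P := M.pred
  P_mem := M.pred_mem
  calibrated i p _ := by
    have hdiv (c : X × Bool → Prop) [DecidablePred c] :
        ∑ z, (if c z then M.jointMass z / M.total else 0)
          = (∑ z, if c z then M.jointMass z else 0) / M.total := by
      simp only [sum_div, ite_div, zero_div]
    rw [hdiv, hdiv, sum_jointMass_level, mul_div_assoc]

theorem acc_toCollabSetting (Y : X → Bool) :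
    acc M.toCollabSetting Y = M.score Y / M.total := by
  rw [← sum_jointMass_eq_score, sum_div]
  exact sum_congr rfl fun z _ ↦ by simp only [ite_div, zero_div]; rfl

theorem exists_score_agent_le_of_iInf_le [Nonempty (Fin n)] {C : (Fin n → ℝ) → Bool}
    (hC : (⨅ i, accAgent M.toCollabSetting i) ≤ accStrat M.toCollabSetting C) :
    ∃ i, M.score (fun x ↦ rnd (M.pred i x)) ≤ M.score fun x ↦ C fun j ↦ M.pred j x := by
  obtain ⟨i, hi⟩ := exists_eq_ciInf_of_finite (f := accAgent M.toCollabSetting)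
  have hle : accAgent M.toCollabSetting i ≤ accStrat M.toCollabSetting C := hi.trans_le hC
  refine ⟨i, (div_le_div_iff_of_pos_right M.total_pos).1 ?_⟩
  exact (M.acc_toCollabSetting _).symm.trans_le (hle.trans_eq (M.acc_toCollabSetting _))

end Population

/-- Two profiles `p true` and `p false` on which agent `k` is undecided, together with a confidence
level `q < 1` that exceeds the probability each agent gives to label `s` in profile `s`. The
profile `p s` is meant to be one on which the strategy outputs `s`. -/
structure Dispute {n : ℕ} (k : Fin n) where
  p : Bool → Fin n → ℝ
  q : ℝ
  p_mem : ∀ s i, p s i ∈ Set.Ioo 0 1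
  p_self : ∀ s, p s k = 1 / 2
  labelProb_lt : ∀ s i, labelProb s (p s i) < q
  q_lt_one : q < 1

namespace Dispute

variable {n : ℕ} {k : Fin n} (D : Dispute k)

theorem half_lt_q : 1 / 2 < D.q := by
  simpa only [D.p_self, labelProb_true] using D.labelProb_lt true k

theorem q_mem : D.q ∈ Set.Ioo 0 1 := ⟨by linarith [D.half_lt_q], D.q_lt_one⟩

/-- The mass of near-certain points with label `s` which, predicted as `p s i`, restores the
calibration of agent `i` after a unit of mass with label `!s` has been predicted as `p s i`. -/
noncomputable def filler (s : Bool) (i : Fin n) : ℝ :=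
  labelProb s (D.p s i) / (D.q - labelProb s (D.p s i))

theorem filler_nonneg (s : Bool) (i : Fin n) : 0 ≤ D.filler s i :=
  div_nonneg (labelProb_mem_Ioo (D.p_mem s i) s).1.le (sub_pos.2 (D.labelProb_lt s i)).le

theorem filler_balance (s : Bool) (i : Fin n) :
    labelProb s 0 - D.p s i + D.filler s i * (labelProb s D.q - D.p s i) = 0 := by
  have hfill : D.filler s i * (D.q - labelProb s (D.p s i)) = labelProb s (D.p s i) :=
    div_mul_cancel₀ _ (sub_pos.2 (D.labelProb_lt s i)).ne'
  cases s <;> simp only [labelProb_true, labelProb_false] at hfill ⊢ <;> linarith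

/-- A mass exceeding the fillers of any single agent. -/
noncomputable def bulk : ℝ := 1 + ∑ i, ∑ s, D.filler s i

theorem sum_filler_lt_bulk (i : Fin n) : ∑ s, D.filler s i < D.bulk := by
  have hle : ∑ s, D.filler s i ≤ ∑ j, ∑ s, D.filler s j :=
    single_le_sum (f := fun j ↦ ∑ s, D.filler s j)
      (fun j _ ↦ sum_nonneg fun s _ ↦ D.filler_nonneg s j) (mem_univ i)
  rw [bulk]
  linarith

theorem bulk_pos : 0 < D.bulk :=
  (sum_nonneg fun s _ ↦ D.filler_nonneg s k).trans_lt (D.sum_filler_lt_bulk k)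

/-- The prediction under which agent `k` pools the two bulk regions: the mean label of a mixture of
two parts of mean `q` and one part of mean `1 - q`. -/
noncomputable def pooled : ℝ := (1 + D.q) / 3

theorem half_lt_pooled : 1 / 2 < D.pooled := by
  rw [pooled]
  linarith [D.half_lt_q]

theorem pooled_mem : D.pooled ∈ Set.Ioo 0 1 :=
  ⟨by linarith [D.half_lt_pooled], by rw [pooled]; linarith [D.q_lt_one]⟩

/-- The points of the population built from a dispute. `(s, none)` carries the profile `p s`;
`(s, some j)` is the filler of agent `j` with label `s` if `j ≠ k`, and the bulk region with
label `s` if `j = k`. -/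
abbrev Point (n : ℕ) : Type := Bool × Option (Fin n)

/-- The mass of each point of the dispute. -/
noncomputable def mass : Point n → ℝ
  | (_, none) => 1
  | (s, some j) => if j = k then (if s then 2 * D.bulk else D.bulk) else D.filler s j

/-- The mean label at each point of the dispute. -/
def mean : Point n → ℝ
  | (s, none) => labelProb s 0
  | (s, some _) => labelProb s D.q

/-- The prediction of each agent. Agent `i` recognises every point `(s, some j)` with `j ≠ i`. -/
noncomputable def pred (i : Fin n) : Point n → ℝ
  | (s, none) => D.p s i
  | (s, some j) => if j = i then (if i = k then D.pooled else D.p s i) else labelProb s D.q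

/-- The classifier that deferring to agent `k` yields if it outputs `s` on the profile `p s`. -/
def deferral (k : Fin n) : Point n → Bool
  | (s, none) => s
  | (s, some j) => if j = k then true else s

theorem mass_nonneg (x : Point n) : 0 ≤ D.mass x := by
  rcases x with ⟨s, _ | j⟩
  · exact zero_le_one
  · simp only [mass]
    split_ifs
    · exact mul_nonneg zero_le_two D.bulk_pos.le
    · exact D.bulk_pos.le
    · exact D.filler_nonneg s j

theorem sum_mass_pos : 0 < ∑ x, D.mass x :=
  sum_pos' (fun x _ ↦ D.mass_nonneg x) ⟨(true, none), mem_univ _, zero_lt_one⟩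

theorem mean_mem (x : Point n) : D.mean x ∈ Set.Icc 0 1 := by
  rcases x with ⟨s, _ | j⟩
  · exact labelProb_mem_Icc (Set.left_mem_Icc.2 zero_le_one) s
  · exact Set.Ioo_subset_Icc_self (labelProb_mem_Ioo D.q_mem s)

theorem pred_mem (i : Fin n) (x : Point n) : D.pred i x ∈ Set.Ioo 0 1 := by
  rcases x with ⟨s, _ | j⟩
  · exact D.p_mem s i
  · simp only [pred]
    split_ifs
    · exact D.pooled_mem
    · exact D.p_mem s i
    · exact labelProb_mem_Ioo D.q_mem s

theorem sum_residual_some (i : Fin n) (f : ℝ → ℝ) (s : Bool) :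
    ∑ j, D.mass (s, some j) * (D.mean (s, some j) - D.pred i (s, some j))
        * f (D.pred i (s, some j))
      = D.mass (s, some i) * (D.mean (s, some i) - D.pred i (s, some i))
        * f (D.pred i (s, some i)) :=
  Fintype.sum_eq_single i fun j hj ↦ by simp only [mean, pred, if_neg hj, sub_self, mul_zero,
    zero_mul]

theorem calibrated (i : Fin n) (f : ℝ → ℝ) :
    ∑ x, D.mass x * (D.mean x - D.pred i x) * f (D.pred i x) = 0 := by
  simp only [Fintype.sum_prod_type, Fintype.sum_option, sum_residual_some]
  by_cases hik : i = k
  · subst hik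
    simp only [Fintype.sum_bool, mass, mean, pred, if_true, D.p_self, pooled, labelProb_true,
      labelProb_false, Bool.false_eq_true, if_false]
    ring
  · simp only [mass, mean, pred, if_neg hik, if_true, one_mul, ← add_mul, filler_balance,
      zero_mul, sum_const_zero]

/-- The population in which deferring to agent `k` does worse than every agent. -/
noncomputable def toPopulation : Population n (Point n) where
  mass := D.mass
  mean := D.mean
  pred := D.pred
  mass_nonneg := D.mass_nonneg
  total_pos := D.sum_mass_pos
  mean_mem := D.mean_mem
  pred_mem i x := Set.Ioo_subset_Icc_self (D.pred_mem i x)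
  calibrated := D.calibrated

/-- The mass that agent `i` classifies correctly at a point, in excess of the deferral. -/
noncomputable def gain (i : Fin n) (x : Point n) : ℝ :=
  D.mass x * (labelProb (rnd (D.pred i x)) (D.mean x) - labelProb (deferral k x) (D.mean x))

theorem sum_gain (i : Fin n) :
    ∑ x, D.gain i x
      = D.toPopulation.score (fun x ↦ rnd (D.pred i x)) - D.toPopulation.score (deferral k) := by
  simp only [gain, mul_sub, sum_sub_distrib]
  rfl

theorem gain_none (i : Fin n) (s : Bool) :
    D.gain i (s, none) = labelProb (rnd (D.p s i)) (labelProb s 0) := by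
  simp only [gain, mass, mean, pred, deferral, labelProb_labelProb_self, sub_zero, one_mul]

theorem gain_none_nonneg (i : Fin n) (s : Bool) : 0 ≤ D.gain i (s, none) := by
  rw [gain_none]
  exact (labelProb_mem_Icc (D.mean_mem (s, none)) _).1

theorem gain_some_of_ne {i j : Fin n} (hji : j ≠ i) (hjk : j ≠ k) (s : Bool) :
    D.gain i (s, some j) = 0 := by
  simp only [gain, pred, deferral, if_neg hji, if_neg hjk, rnd_labelProb D.half_lt_q, sub_self,
    mul_zero]

theorem neg_filler_le_gain {i : Fin n} (hik : i ≠ k) (s : Bool) :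
    -(D.filler s i * (2 * D.q - 1)) ≤ D.gain i (s, some i) := by
  have hloss : -(2 * D.q - 1) ≤
      labelProb (rnd (D.p s i)) (labelProb s D.q) - labelProb s (labelProb s D.q) := by
    have hq := D.half_lt_q
    cases s <;> cases rnd (D.p _ i) <;> simp only [labelProb_true, labelProb_false] <;> linarith
  simpa only [gain, mass, mean, pred, deferral, if_neg hik, if_true, mul_neg] using
    mul_le_mul_of_nonneg_left hloss (D.filler_nonneg s i)

theorem sum_gain_bulk {i : Fin n} (hik : i ≠ k) :
    ∑ s, D.gain i (s, some k) = D.bulk * (2 * D.q - 1) := by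
  simp only [Fintype.sum_bool, gain, mass, mean, pred, deferral, if_neg hik.symm, if_true,
    rnd_labelProb D.half_lt_q, labelProb_true, labelProb_false, Bool.false_eq_true, if_false]
  ring

theorem sum_gain_self : ∑ x, D.gain k x = 1 := by
  have hsome (s : Bool) (j : Fin n) : D.gain k (s, some j) = 0 := by
    rcases eq_or_ne j k with rfl | hjk
    · simp only [gain, pred, deferral, if_true, rnd_of_half_le D.half_lt_pooled.le, sub_self,
        mul_zero]
    · exact D.gain_some_of_ne hjk hjk s
  simp only [Fintype.sum_prod_type, Fintype.sum_option, Fintype.sum_bool, hsome, gain_none,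
    D.p_self, rnd_of_half_le le_rfl, labelProb_true, labelProb_false, sum_const_zero]
  norm_num

theorem sum_gain_pos_of_ne {i : Fin n} (hik : i ≠ k) : 0 < ∑ x, D.gain i x := by
  have hsome (s : Bool) : ∑ j, D.gain i (s, some j) = D.gain i (s, some i) + D.gain i (s, some k) :=
    Fintype.sum_eq_add i k hik fun j hj ↦ D.gain_some_of_ne hj.1 hj.2 s
  have hfill : -((∑ s, D.filler s i) * (2 * D.q - 1)) ≤ ∑ s, D.gain i (s, some i) := by
    rw [sum_mul, ← sum_neg_distrib]
    exact sum_le_sum fun s _ ↦ D.neg_filler_le_gain hik s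
  calc
    0 < (D.bulk - ∑ s, D.filler s i) * (2 * D.q - 1) :=
      mul_pos (sub_pos.2 (D.sum_filler_lt_bulk i)) (by linarith [D.half_lt_q])
    _ ≤ ∑ s, D.gain i (s, some i) + ∑ s, D.gain i (s, some k) := by
      rw [sum_gain_bulk D hik]
      linarith
    _ ≤ ∑ s, D.gain i (s, none) + (∑ s, D.gain i (s, some i) + ∑ s, D.gain i (s, some k)) :=
      le_add_of_nonneg_left (sum_nonneg fun s _ ↦ D.gain_none_nonneg i s)
    _ = ∑ x, D.gain i x := by
      simp only [Fintype.sum_prod_type, Fintype.sum_option, hsome, sum_add_distrib]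

theorem score_deferral_lt (i : Fin n) :
    D.toPopulation.score (deferral k) < D.toPopulation.score fun x ↦ rnd (D.pred i x) := by
  rw [← sub_pos, ← sum_gain]
  rcases eq_or_ne i k with rfl | hik
  · exact D.sum_gain_self ▸ zero_lt_one
  · exact D.sum_gain_pos_of_ne hik

theorem strategy_pred_eq_deferral {C : (Fin n → ℝ) → Bool}
    (hdefer : ∀ p : Fin n → ℝ, (∀ i, p i ∈ Set.Ioo 0 1) → p k ≠ 1 / 2 → C p = rnd (p k))
    (hC : ∀ s, C (D.p s) = s) (x : Point n) : C (fun i ↦ D.pred i x) = deferral k x := by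
  rcases x with ⟨s, _ | j⟩
  · exact hC s
  · have hself : D.pred k (s, some j) = if j = k then D.pooled else labelProb s D.q := by
      simp only [pred, if_true]
    have hne : D.pred k (s, some j) ≠ 1 / 2 := by
      rw [hself]
      split_ifs
      · exact D.half_lt_pooled.ne'
      · exact labelProb_ne_half D.half_lt_q s
    rw [hdefer _ (fun i ↦ D.pred_mem i _) hne, hself, apply_ite rnd,
      rnd_of_half_le D.half_lt_pooled.le, rnd_labelProb D.half_lt_q, deferral]

theorem exists_p_eq {p : Bool → Fin n → ℝ} (hp : ∀ s i, p s i ∈ Set.Ioo 0 1)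
    (hpk : ∀ s, p s k = 1 / 2) : ∃ D : Dispute k, D.p = p := by
  let confidences : Finset ℝ := univ.image fun z : Bool × Fin n ↦ labelProb z.1 (p z.1 z.2)
  have hlt_one : ∀ c ∈ confidences, ∀ y ∈ ({1} : Finset ℝ), c < y :=
    forall_mem_image.2 fun z _ y hy ↦
      mem_singleton.1 hy ▸ (labelProb_mem_Ioo (hp z.1 z.2) z.1).2
  obtain ⟨q, hpq, hq⟩ := Order.exists_between_finsets confidences {1} hlt_one
  exact ⟨⟨p, q, hp, hpk, fun s i ↦ hpq _ (mem_image_of_mem _ (mem_univ (s, i))),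
    hq 1 (mem_singleton_self 1)⟩, rfl⟩

end Dispute

/-- A reliable deferring strategy is constant when the deferred agent predicts 1/2. -/
theorem stmt_4 (n : ℕ) (hn : 1 ≤ n) (C : (Fin n → ℝ) → Bool) (k : Fin n)
    (hdefer : ∀ p : Fin n → ℝ,
      (∀ i, p i ∈ Set.Ioo (0 : ℝ) 1) → p k ≠ 1/2 → C p = rnd (p k))
    (hreliable : ∀ S : CollabSetting n, (⨅ i : Fin n, accAgent S i) ≤ accStrat S C) :
    ∃ α : Bool, ∀ p : Fin n → ℝ,
      (∀ i, p i ∈ Set.Ioo (0 : ℝ) 1) → p k = 1/2 → C p = α := by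
  by_contra! hcon
  choose p hp hpk hCp using fun s ↦ hcon !s
  obtain ⟨D, rfl⟩ := Dispute.exists_p_eq hp hpk
  have : Nonempty (Fin n) := ⟨k⟩
  obtain ⟨i, hi⟩ := D.toPopulation.exists_score_agent_le_of_iInf_le (hreliable _)
  have hC (s : Bool) : C (D.p s) = s := Bool.ne_not.1 (hCp s)
  have hdef : (fun x ↦ C fun j ↦ D.toPopulation.pred j x) = Dispute.deferral k :=
    funext (D.strategy_pred_eq_deferral hdefer hC)
  rw [hdef] at hi
  exact (D.score_deferral_lt i).not_ge hi
end

section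
/- Let n ≥ 1, let k ∈ [n], and let C : [0,1]^n → {0,1} be a collaboration strategy. Suppose there exist two tuples (p_1, …, p_n), (q_1, …, q_n) ∈ (0,1)^n with p_k = q_k = 1/2 such that C(p_1, …, p_n) = 1 and C(q_1, …, q_n) = 0. Then there exists a collaboration setting S_2 such that acc_C(S_2) < acc_k(S_2). -/
open Finset

/-!
Give the profile `p` the label 0 and the profile `q` the label 1, with weights `1 - v` and `v`
for `v = p k = q k`. Agent `k` is then calibrated and right on one of the two points, while `C` is
wrong on both. The other agents are made calibrated by extra points: for each base point and each
agent `j ≠ k`, one point of the opposite label on which `j` repeats its prediction while everybody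
else is certain and right. Agent `k` errs on none of the extra points, so its lead survives.
-/

/-- A finite sample with deterministic labels, unnormalised weights and predictions of `n` agents
that need not be calibrated: the raw material for a `CollabSetting`. -/
structure WeightedSample (n : ℕ) (X : Type) where
  weight : X → ℝ
  label : X → Bool
  pred : Fin n → X → ℝ
  weight_nonneg : ∀ x, 0 ≤ weight x
  pred_mem : ∀ i x, pred i x ∈ Set.Icc (0 : ℝ) 1

namespace WeightedSample

variable {n : ℕ} {X : Type} (S : WeightedSample n X)

section Normalization

variable [Fintype X]

/-- The normalising constant of the weights. -/
noncomputable def totalWeight : ℝ := ∑ x, S.weight x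

/-- The total weight of the points that the classifier `Yhat` labels correctly, i.e. its
unnormalised accuracy. -/
noncomputable def score (Yhat : X → Bool) : ℝ :=
  ∑ x, if Yhat x = S.label x then S.weight x else 0

/-- The weighted sum of `label - v` over the points where agent `i` predicts `v`. Agent `i` is
calibrated when it vanishes for all `v`. -/
noncomputable def bias (i : Fin n) (v : ℝ) : ℝ :=
  ∑ x, if S.pred i x = v then S.weight x * ((S.label x).toNat - v) else 0

/-- The normalised distribution on labelled points, supported on the graph of `label`. -/
noncomputable def density (z : X × Bool) : ℝ :=
  if z.2 = S.label z.1 then S.weight z.1 / S.totalWeight else 0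

theorem score_nonneg (Yhat : X → Bool) : 0 ≤ S.score Yhat :=
  sum_nonneg fun x _ => ite_nonneg (S.weight_nonneg x) le_rfl

theorem score_le_totalWeight (Yhat : X → Bool) : S.score Yhat ≤ S.totalWeight :=
  sum_le_sum fun x _ => by
    split_ifs
    exacts [le_rfl, S.weight_nonneg x]

theorem totalWeight_pos_of_score_lt {f g : X → Bool} (h : S.score f < S.score g) :
    0 < S.totalWeight :=
  (S.score_nonneg f).trans_lt (h.trans_le (S.score_le_totalWeight g))

theorem density_nonneg (z : X × Bool) : 0 ≤ S.density z :=
  ite_nonneg (div_nonneg (S.weight_nonneg z.1) (sum_nonneg fun x _ => S.weight_nonneg x)) le_rfl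

theorem sum_ite_density (E : X → Bool → Prop) [∀ x y, Decidable (E x y)] :
    (∑ z : X × Bool, if E z.1 z.2 then S.density z else 0)
      = (∑ x, if E x (S.label x) then S.weight x else 0) / S.totalWeight := by
  rw [Fintype.sum_prod_type, sum_div]
  refine sum_congr rfl fun x _ => ?_
  cases h : S.label x <;> simp [density, h, ite_div]

theorem bias_eq_sub (i : Fin n) (v : ℝ) :
    S.bias i v = (∑ x, if S.pred i x = v ∧ S.label x = true then S.weight x else 0)
      - v * ∑ x, if S.pred i x = v then S.weight x else 0 := by
  rw [bias, mul_sum, ← sum_sub_distrib]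
  refine sum_congr rfl fun x _ => ?_
  by_cases hv : S.pred i x = v
  · cases S.label x
    · simp [hv, mul_comm v]
    · simpa [hv] using by ring
  · simp [hv]

/-- The collaboration setting obtained by normalising the weights of a calibrated sample. -/
noncomputable def toCollabSetting (hpos : 0 < S.totalWeight) (hcal : ∀ i v, S.bias i v = 0) :
    CollabSetting n where
  X := X
  D := S.density
  D_nonneg := S.density_nonneg
  D_sum_one := by
    have hsum := S.sum_ite_density fun _ _ => True
    simp only [if_true] at hsum
    exact hsum.trans (div_self hpos.ne')
  P := S.pred
  P_mem := S.pred_mem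
  calibrated i v _ := by
    have hbias := S.bias_eq_sub i v
    rw [hcal, eq_comm, sub_eq_zero] at hbias
    rw [S.sum_ite_density fun x y => S.pred i x = v ∧ y = true,
      S.sum_ite_density fun x _ => S.pred i x = v, hbias, mul_div_assoc]

theorem accStrat_toCollabSetting (hpos : 0 < S.totalWeight) (hcal : ∀ i v, S.bias i v = 0)
    (C : (Fin n → ℝ) → Bool) :
    accStrat (S.toCollabSetting hpos hcal) C
      = S.score (fun x => C fun i => S.pred i x) / S.totalWeight :=
  S.sum_ite_density fun x y => C (fun i => S.pred i x) = y

theorem accAgent_toCollabSetting (hpos : 0 < S.totalWeight) (hcal : ∀ i v, S.bias i v = 0)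
    (k : Fin n) :
    accAgent (S.toCollabSetting hpos hcal) k
      = S.score (fun x => rnd (S.pred k x)) / S.totalWeight :=
  S.sum_ite_density fun x y => rnd (S.pred k x) = y

end Normalization

/-- The extension of a sample by points `(x, some j)`, one for each point `x` and each agent
`j ≠ k`, that make every agent other than `k` calibrated. Such a point carries the label opposite
to that of `x`; agent `j` cannot tell it from `x`, and all other agents predict its label with
certainty. The original sample sits at the points `(x, none)`. -/
noncomputable def completion (k : Fin n) :
    WeightedSample n (X × Option {j : Fin n // j ≠ k}) where
  weight
    | (x, none) => S.weight x
    -- The odds, according to agent `j`, against the label of `x`; division by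
    -- zero makes them 0 when `j` is certain of the wrong label.
    | (x, some j) => S.weight x *
        ((S.pred j x - (S.label x).toNat) / ((!S.label x).toNat - S.pred j x))
  label
    | (x, none) => S.label x
    | (x, some _) => !S.label x
  pred
    | i, (x, none) => S.pred i x
    | i, (x, some j) => if j = i then S.pred i x else (!S.label x).toNat
  weight_nonneg := by
    rintro ⟨x, _ | j⟩
    · exact S.weight_nonneg x
    · obtain ⟨h0, h1⟩ := S.pred_mem j x
      refine mul_nonneg (S.weight_nonneg x) ?_
      cases S.label x
      · simpa using div_nonneg h0 (sub_nonneg.2 h1)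
      · simpa using div_nonneg_of_nonpos (sub_nonpos.2 h1) (neg_nonpos.2 h0)
  pred_mem := by
    rintro i ⟨x, _ | j⟩
    · exact S.pred_mem i x
    · dsimp only
      split_ifs
      · exact S.pred_mem i x
      · cases S.label x <;> simp

theorem rnd_pred_completion_some (k : Fin n) (x : X) (j : {j : Fin n // j ≠ k}) :
    rnd ((S.completion k).pred k (x, some j)) = !S.label x := by
  cases h : S.label x <;> norm_num [completion, rnd, j.2, h]

section Completion

variable [Fintype X]

theorem bias_completion_self (k : Fin n) (v : ℝ) : (S.completion k).bias k v = S.bias k v := by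
  simp only [bias, Fintype.sum_prod_type, Fintype.sum_option]
  refine sum_congr rfl fun x _ => add_eq_left.2 (sum_eq_zero fun j _ => ?_)
  have certain : (S.completion k).pred k (x, some j) = ((!S.label x).toNat : ℝ) := if_neg j.2
  rw [certain]
  split_ifs with hv
  · simp [completion, hv]
  · rfl

theorem bias_completion_of_ne {i k : Fin n} (hik : i ≠ k)
    (hpred : ∀ x, S.pred i x ≠ (!S.label x).toNat) (v : ℝ) : (S.completion k).bias i v = 0 := by
  simp only [bias, Fintype.sum_prod_type, Fintype.sum_option]
  refine sum_eq_zero fun x _ => ?_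
  rw [sum_eq_single ⟨i, hik⟩ ?certain (by simp)]
  case certain =>
    intro j _ hj
    have hji : (j : Fin n) ≠ i := fun h => hj (Subtype.ext h)
    simp +contextual [completion, hji]
  have hne : ((!S.label x).toNat : ℝ) - S.pred i x ≠ 0 := sub_ne_zero.2 (hpred x).symm
  by_cases hv : S.pred i x = v
  · subst hv
    simp only [completion, if_true]
    rw [mul_assoc, div_mul_cancel₀ _ hne]
    ring
  · simp [completion, hv]

theorem score_completion_lt {k : Fin n} {f g : X × Option {j : Fin n // j ≠ k} → Bool}
    (hg : ∀ x j, g (x, some j) = !S.label x)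
    (hfg : S.score (fun x => f (x, none)) < S.score fun x => g (x, none)) :
    (S.completion k).score f < (S.completion k).score g := by
  simp only [score, Fintype.sum_prod_type_right, Fintype.sum_option]
  refine add_lt_add_of_lt_of_le hfg (sum_le_sum fun j _ => sum_le_sum fun x _ => ?_)
  have hcorrect : g (x, some j) = (S.completion k).label (x, some j) := hg x j
  rw [if_pos hcorrect]
  split_ifs
  · exact le_rfl
  · exact (S.completion k).weight_nonneg _

theorem exists_accStrat_lt_accAgent {k : Fin n} {C : (Fin n → ℝ) → Bool}
    (hpred : ∀ i ≠ k, ∀ x, S.pred i x ≠ (!S.label x).toNat) (hcal : ∀ v, S.bias k v = 0)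
    (hscore : S.score (fun x => C fun i => S.pred i x) < S.score fun x => rnd (S.pred k x)) :
    ∃ T : CollabSetting n, accStrat T C < accAgent T k := by
  let R := S.completion k
  have hR : R.score (fun x => C fun i => R.pred i x) < R.score fun x => rnd (R.pred k x) :=
    S.score_completion_lt (S.rnd_pred_completion_some k) hscore
  have hpos : 0 < R.totalWeight := R.totalWeight_pos_of_score_lt hR
  have hRcal (i : Fin n) (v : ℝ) : R.bias i v = 0 := by
    obtain rfl | hik := eq_or_ne i k
    · exact (S.bias_completion_self i v).trans (hcal v)
    · exact S.bias_completion_of_ne hik (hpred i hik) v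
  refine ⟨R.toCollabSetting hpos hRcal, ?_⟩
  rw [accStrat_toCollabSetting, accAgent_toCollabSetting]
  exact div_lt_div_of_pos_right hR hpos

end Completion

end WeightedSample

section OpposedSample

variable {n : ℕ} {p q : Fin n → ℝ}

/-- The two-point sample in which the profile `p` has label 0 and weight `1 - v`, and the profile
`q` has label 1 and weight `v`. The points are named by their labels. -/
noncomputable def opposedSample (hp : ∀ i, p i ∈ Set.Icc (0 : ℝ) 1)
    (hq : ∀ i, q i ∈ Set.Icc (0 : ℝ) 1) {v : ℝ} (hv : v ∈ Set.Icc (0 : ℝ) 1) :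
    WeightedSample n Bool where
  weight y := if y then v else 1 - v
  label y := y
  pred i y := if y then q i else p i
  weight_nonneg y := by cases y <;> simp [hv.1, hv.2]
  pred_mem i y := by cases y <;> simp only [hp i, hq i, if_true, Bool.false_eq_true, if_false]

variable (hp : ∀ i, p i ∈ Set.Icc (0 : ℝ) 1) (hq : ∀ i, q i ∈ Set.Icc (0 : ℝ) 1) {v : ℝ}
  (hv : v ∈ Set.Icc (0 : ℝ) 1)

theorem bias_opposedSample {k : Fin n} (hpk : p k = v) (hqk : q k = v) (u : ℝ) :
    (opposedSample hp hq hv).bias k u = 0 := by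
  obtain rfl | hu := eq_or_ne v u
  · have hbias : v * (1 - v) + (1 - v) * (0 - v) = 0 := by ring
    simpa [WeightedSample.bias, opposedSample, hpk, hqk] using hbias
  · simp [WeightedSample.bias, opposedSample, hpk, hqk, hu]

theorem score_strat_opposedSample {C : (Fin n → ℝ) → Bool} (hCp : C p = true)
    (hCq : C q = false) :
    (opposedSample hp hq hv).score (fun y => C fun i => (opposedSample hp hq hv).pred i y) = 0 := by
  simp [WeightedSample.score, opposedSample, hCp, hCq]

theorem score_agent_opposedSample_pos {k : Fin n} (hpk : p k = v) (hqk : q k = v) :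
    0 < (opposedSample hp hq hv).score fun y => rnd ((opposedSample hp hq hv).pred k y) := by
  by_cases h : 1 / 2 ≤ v
  · have hround : rnd v = true := if_pos h
    have hv_pos : 0 < v := by linarith
    simpa [WeightedSample.score, opposedSample, hpk, hqk, hround] using hv_pos
  · have hround : rnd v = false := if_neg h
    have hv_lt : v < 1 := by linarith
    simpa [WeightedSample.score, opposedSample, hpk, hqk, hround] using hv_lt

end OpposedSample

theorem stmt_6_general {n : ℕ} (k : Fin n) (C : (Fin n → ℝ) → Bool) (p q : Fin n → ℝ)
    (hp : ∀ i, p i ∈ Set.Ico (0 : ℝ) 1) (hq : ∀ i, q i ∈ Set.Ioc (0 : ℝ) 1) (hpq : p k = q k)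
    (hCp : C p = true) (hCq : C q = false) :
    ∃ S : CollabSetting n, accStrat S C < accAgent S k := by
  have hp' (i : Fin n) := Set.Ico_subset_Icc_self (hp i)
  have hq' (i : Fin n) := Set.Ioc_subset_Icc_self (hq i)
  refine (opposedSample hp' hq' (hq' k)).exists_accStrat_lt_accAgent ?_
    (bias_opposedSample hp' hq' (hq' k) hpq rfl) ?_
  · rintro i - (_ | _)
    · simpa [opposedSample] using (hp i).2.ne
    · simpa [opposedSample] using (hq i).1.ne'
  · rw [score_strat_opposedSample hp' hq' (hq' k) hCp hCq]
    exact score_agent_opposedSample_pos hp' hq' (hq' k) hpq rfl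

/-- If C takes both values on tuples where agent k predicts 1/2,
there is a setting where C is strictly worse than agent k. -/
theorem stmt_6 (n : ℕ) (hn : 1 ≤ n) (k : Fin n) (C : (Fin n → ℝ) → Bool)
    (p q : Fin n → ℝ)
    (hp : ∀ i, p i ∈ Set.Ioo (0 : ℝ) 1) (hq : ∀ i, q i ∈ Set.Ioo (0 : ℝ) 1)
    (hpk : p k = 1/2) (hqk : q k = 1/2)
    (hCp : C p = true) (hCq : C q = false) :
    ∃ S : CollabSetting n, accStrat S C < accAgent S k :=
  stmt_6_general k C p q (fun i => Set.Ioo_subset_Ico_self (hp i))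
    (fun i => Set.Ioo_subset_Ioc_self (hq i)) (hpk.trans hqk.symm) hCp hCq
end

section
/- Let n ≥ 1 and fix k ∈ [n]. Define the collaboration strategy C : [0,1]^n → {0,1} by: C(p_1, …, p_n) = 1 if p_i = 1 for some i ∈ [n]; otherwise C(p_1, …, p_n) = 0 if p_i = 0 for some i ∈ [n]; otherwise C(p_1, …, p_n) = round(p_k). Then acc_C(S) ≥ acc_k(S) for every collaboration setting S; in particular, C is reliable. -/
open Finset

/-!
By calibration, an agent who predicts `1` is almost surely right that `Y = 1`, and one who predicts
`0` is almost surely right that `Y = 0`. Overruling any classifier by a certain agent can therefore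
only lose on points of mass zero, which do not affect accuracy; certain agents who contradict each
other likewise meet only on such points.
-/

namespace CollabSetting

variable {n : ℕ} (S : CollabSetting n)

/-- The joint probability `Pr[P i X = p, Y = y]`. -/
noncomputable def levelMass (i : Fin n) (p : ℝ) (y : Bool) : ℝ :=
  ∑ x with S.P i x = p, S.D (x, y)

lemma levelMass_nonneg (i : Fin n) (p : ℝ) (y : Bool) : 0 ≤ S.levelMass i p y :=
  sum_nonneg fun _ _ ↦ S.D_nonneg _

lemma levelMass_true_eq_mul (i : Fin n) (p : ℝ) :
    S.levelMass i p true = p * (S.levelMass i p true + S.levelMass i p false) := by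
  have level_eq : (∑ z : S.X × Bool, if S.P i z.1 = p then S.D z else 0) =
      S.levelMass i p true + S.levelMass i p false := by
    simp only [levelMass, sum_filter, Fintype.sum_prod_type_right, Fintype.sum_bool]
  have level_true_eq : (∑ z : S.X × Bool, if S.P i z.1 = p ∧ z.2 = true then S.D z else 0) =
      S.levelMass i p true := by
    simp [levelMass, sum_filter, Fintype.sum_prod_type_right]
  have true_nonneg := S.levelMass_nonneg i p true
  have false_nonneg := S.levelMass_nonneg i p false
  rcases (add_nonneg true_nonneg false_nonneg).eq_or_lt with level_null | level_pos
  · rw [← level_null, mul_zero]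
    linarith
  · rw [← level_eq, ← level_true_eq]
    exact S.calibrated i p (level_eq ▸ level_pos)

lemma levelMass_zero_true (i : Fin n) : S.levelMass i 0 true = 0 := by
  simpa using S.levelMass_true_eq_mul i 0

lemma levelMass_one_false (i : Fin n) : S.levelMass i 1 false = 0 := by
  simpa using S.levelMass_true_eq_mul i 1

variable {S}

lemma levelMass_ne_zero {i : Fin n} {x : S.X} {p : ℝ} {y : Bool} (hx : S.P i x = p)
    (hD : S.D (x, y) ≠ 0) : S.levelMass i p y ≠ 0 := fun h ↦
  hD <| (sum_eq_zero_iff_of_nonneg fun _ _ ↦ S.D_nonneg _).1 h x (by simp [hx])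

lemma label_eq_true_of_P_eq_one {i : Fin n} {x : S.X} {y : Bool} (hx : S.P i x = 1)
    (hD : S.D (x, y) ≠ 0) : y = true := by
  by_contra hy
  obtain rfl := Bool.eq_false_of_not_eq_true hy
  exact levelMass_ne_zero hx hD (S.levelMass_one_false i)

lemma label_eq_false_of_P_eq_zero {i : Fin n} {x : S.X} {y : Bool} (hx : S.P i x = 0)
    (hD : S.D (x, y) ≠ 0) : y = false := by
  by_contra hy
  obtain rfl := Bool.eq_true_of_not_eq_false hy
  exact levelMass_ne_zero hx hD (S.levelMass_zero_true i)

lemma acc_le_acc_of_forall_ne_zero {Yhat Yhat' : S.X → Bool}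
    (h : ∀ x y, S.D (x, y) ≠ 0 → Yhat x = y → Yhat' x = y) : acc S Yhat ≤ acc S Yhat' := by
  refine sum_le_sum fun ⟨x, y⟩ _ ↦ ?_
  rcases eq_or_ne (S.D (x, y)) 0 with hD | hD
  · simp [hD]
  by_cases hY : Yhat x = y
  · simp [hY, h x y hD hY]
  · simpa [hY] using ite_nonneg (S.D_nonneg _) le_rfl

variable (S)

open Classical in
/-- The classifier that follows an agent predicting `1` if there is one, otherwise an agent
predicting `0` if there is one, and falls back on `Yhat` where no agent is certain. -/
noncomputable def deferToCertain (Yhat : S.X → Bool) (x : S.X) : Bool :=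
  if ∃ i, S.P i x = 1 then true else if ∃ i, S.P i x = 0 then false else Yhat x

end CollabSetting

theorem stmt_12_general {n : ℕ} (S : CollabSetting n) (Yhat : S.X → Bool) :
    acc S Yhat ≤ acc S (S.deferToCertain Yhat) := by
  refine CollabSetting.acc_le_acc_of_forall_ne_zero fun x y hD hY ↦ ?_
  unfold CollabSetting.deferToCertain
  split_ifs with some_one some_zero
  · obtain ⟨i, hi⟩ := some_one
    exact (CollabSetting.label_eq_true_of_P_eq_one hi hD).symm
  · obtain ⟨i, hi⟩ := some_zero
    exact (CollabSetting.label_eq_false_of_P_eq_zero hi hD).symm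
  · exact hY

open Classical in
/-- Deferring to agent k except when some agent is certain performs at
least as well as agent k, and is in particular reliable. -/
theorem stmt_12 (n : ℕ) (hn : 1 ≤ n) (k : Fin n) (C : (Fin n → ℝ) → Bool)
    (hC : ∀ p : Fin n → ℝ,
      C p = if ∃ i, p i = 1 then true
            else if ∃ i, p i = 0 then false
            else rnd (p k)) :
    (∀ S : CollabSetting n, accAgent S k ≤ accStrat S C) ∧
    (∀ S : CollabSetting n, (⨅ i : Fin n, accAgent S i) ≤ accStrat S C) := by
  have accStrat_eq (S : CollabSetting n) :
      accStrat S C = acc S (S.deferToCertain fun x ↦ rnd (S.P k x)) :=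
    congrArg (acc S) (funext fun _ ↦ hC _)
  have le_accStrat (S : CollabSetting n) : accAgent S k ≤ accStrat S C :=
    (stmt_12_general S _).trans_eq (accStrat_eq S).symm
  exact ⟨le_accStrat, fun S ↦ Finite.ciInf_le_of_le k (le_accStrat S)⟩
end

section
/- Let n ≥ 2 and define the averaging collaboration strategy C : [0,1]^n → {0,1} by C(p_1, …, p_n) = round((p_1 + ⋯ + p_n)/n). Then C is not reliable: there exists a collaboration setting S such that acc_C(S) < min_{i∈[n]} acc_i(S). -/
open Finset

/-!
Fix `q` slightly below `1/2`. Consider `n + 1` equally likely points: one where the label is surely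
`1`, and `n` others where it is `1` with probability `q`. Agent `j` can only tell whether the point
lies in the pair formed by the sure point and the `j`-th other point, so it predicts `(1 + q) / 2`
on this pair and `q` elsewhere. At the `j`-th uncertain point agent `j` alone is misled. Any
strategy that follows the lone alarmed agent predicts the less likely label at all the uncertain
points, whereas each agent does so at just one of them. The average follows the lone alarm as soon
as `q` is close enough to `1/2`.
-/

section Accuracy

variable {n : ℕ}

lemma rnd_eq_true_iff {p : ℝ} : rnd p = true ↔ 1 / 2 ≤ p := by
  simp [rnd]

lemma rnd_eq_false_iff {p : ℝ} : rnd p = false ↔ p < 1 / 2 := by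
  simp [rnd]

lemma acc_eq_sum (S : CollabSetting n) (Yhat : S.X → Bool) :
    acc S Yhat = ∑ x, S.D (x, Yhat x) := by
  simp only [acc, Fintype.sum_prod_type, Finset.sum_ite_eq, Finset.mem_univ, if_true]

lemma acc_lt_acc {S : CollabSetting n} {f g : S.X → Bool}
    (hle : ∀ x, S.D (x, f x) ≤ S.D (x, g x)) (hlt : ∃ x, S.D (x, f x) < S.D (x, g x)) :
    acc S f < acc S g := by
  obtain ⟨x, hx⟩ := hlt
  rw [acc_eq_sum, acc_eq_sum]
  exact Finset.sum_lt_sum (fun x _ ↦ hle x) ⟨x, Finset.mem_univ x, hx⟩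

end Accuracy

section LabelLaw

variable {X : Type*} (w η : X → ℝ)

/-- The joint law of a point and its label, given by the mass `w x` of each point `x` and the
conditional probability `η x` that the label of `x` is `1`. -/
def labelLaw (z : X × Bool) : ℝ :=
  w z.1 * if z.2 then η z.1 else 1 - η z.1

variable {w η}

lemma labelLaw_nonneg (hw : ∀ x, 0 ≤ w x) (hη : ∀ x, η x ∈ Set.Icc 0 1) (z : X × Bool) :
    0 ≤ labelLaw w η z := by
  refine mul_nonneg (hw z.1) ?_
  split_ifs
  · exact (hη z.1).1
  · exact sub_nonneg.2 (hη z.1).2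

variable (w η)

lemma labelLaw_true_add_false (x : X) :
    labelLaw w η (x, true) + labelLaw w η (x, false) = w x := by
  simp only [labelLaw, if_true, Bool.false_eq_true, if_false]
  ring

variable [Fintype X]

lemma sum_labelLaw : ∑ z, labelLaw w η z = ∑ x, w x := by
  simp only [Fintype.sum_prod_type, Fintype.sum_bool, labelLaw_true_add_false]

variable {w η}

lemma labelLaw_calibrated {f : X → ℝ} {p : ℝ}
    (hf : ∑ x with f x = p, w x * (η x - f x) = 0) :
    (∑ z : X × Bool, if f z.1 = p ∧ z.2 = true then labelLaw w η z else 0)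
      = p * ∑ z : X × Bool, if f z.1 = p then labelLaw w η z else 0 := by
  have hcell : ∑ x with f x = p, w x * η x = p * ∑ x with f x = p, w x := by
    rw [Finset.mul_sum, ← sub_eq_zero, ← Finset.sum_sub_distrib, ← hf]
    refine Finset.sum_congr rfl fun x hx ↦ ?_
    rw [(Finset.mem_filter.1 hx).2]
    ring
  have htrue : (∑ z : X × Bool, if f z.1 = p ∧ z.2 = true then labelLaw w η z else 0)
      = ∑ x with f x = p, w x * η x := by
    simp [Fintype.sum_prod_type, Finset.sum_filter, labelLaw]
  have hmass : (∑ z : X × Bool, if f z.1 = p then labelLaw w η z else 0)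
      = ∑ x with f x = p, w x := by
    simp only [Fintype.sum_prod_type, Fintype.sum_bool, Finset.sum_filter, ite_add_ite, add_zero,
      labelLaw_true_add_false]
  rw [htrue, hmass, hcell]

end LabelLaw

section FalseAlarm

variable {n : ℕ}

/-- The predictions at a point where agent `j` alone is alarmed: the other agents predict `q`. -/
noncomputable def loneAlarm (q : ℝ) (j : Fin n) : Fin n → ℝ :=
  Function.update (fun _ ↦ q) j ((1 + q) / 2)

/-- The conditional probability of label `1` in the false alarm setting: the label is surely `1` at
`none`, and it is `1` with probability `q` at every other point. -/
def alarmProb (q : ℝ) : Option (Fin n) → ℝ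
  | none => 1
  | some _ => q

/-- The predictor of agent `i` in the false alarm setting. Its value `(1 + q) / 2` on
`{none, some i}` is the mean of the label probabilities `1` and `q` there. -/
noncomputable def alarmPrediction (q : ℝ) (i : Fin n) : Option (Fin n) → ℝ
  | none => (1 + q) / 2
  | some j => loneAlarm q j i

lemma alarmPrediction_none (q : ℝ) (i : Fin n) : alarmPrediction q i none = (1 + q) / 2 :=
  rfl

lemma alarmPrediction_some_self (q : ℝ) (i : Fin n) :
    alarmPrediction q i (some i) = (1 + q) / 2 := by
  rw [alarmPrediction, loneAlarm, Function.update_self]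

lemma alarmPrediction_some_of_ne (q : ℝ) {i j : Fin n} (h : i ≠ j) :
    alarmPrediction q i (some j) = q := by
  rw [alarmPrediction, loneAlarm, Function.update_of_ne h]

lemma alarmProb_mem_Icc {q : ℝ} (hq : q ∈ Set.Icc 0 1) (x : Option (Fin n)) :
    alarmProb q x ∈ Set.Icc 0 1 := by
  cases x with
  | none => exact ⟨zero_le_one, le_rfl⟩
  | some j => exact hq

lemma alarmPrediction_mem_Icc {q : ℝ} (hq : q ∈ Set.Icc 0 1) (i : Fin n) (x : Option (Fin n)) :
    alarmPrediction q i x ∈ Set.Icc 0 1 := by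
  have hmean : (1 + q) / 2 ∈ Set.Icc (0 : ℝ) 1 := by
    constructor <;> linarith [hq.1, hq.2]
  rcases x with _ | j
  · exact hmean
  · rcases eq_or_ne i j with rfl | hij
    · simpa only [alarmPrediction_some_self] using hmean
    · simpa only [alarmPrediction_some_of_ne q hij] using hq

lemma sum_alarmProb_sub_alarmPrediction (q : ℝ) (i : Fin n) (p : ℝ) :
    ∑ x with alarmPrediction q i x = p, (alarmProb q x - alarmPrediction q i x) = 0 := by
  have hother (j : Fin n) (hj : j ≠ i) :
      alarmProb q (some j) - alarmPrediction q i (some j) = 0 := by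
    rw [alarmPrediction_some_of_ne q hj.symm, alarmProb, sub_self]
  rw [Finset.sum_filter, Fintype.sum_option,
    Fintype.sum_eq_single i fun j hj ↦ by rw [hother j hj, ite_self]]
  have hpair : (alarmProb q (none : Option (Fin n)) - (1 + q) / 2)
      + (alarmProb q (some i) - (1 + q) / 2) = 0 := by
    simp only [alarmProb]
    ring
  rw [alarmPrediction_none, alarmPrediction_some_self, ite_add_ite, hpair, add_zero, ite_self]

variable (n) in
/-- The false alarm setting: the points `none` and `some j`, for `j : Fin n`, are equally likely,
and agent `i` only observes whether the point lies in `{none, some i}`. -/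
noncomputable def falseAlarmSetting {q : ℝ} (hq : q ∈ Set.Icc 0 1) : CollabSetting n where
  X := Option (Fin n)
  D := labelLaw (fun _ ↦ (n + 1 : ℝ)⁻¹) (alarmProb q)
  D_nonneg := labelLaw_nonneg (fun _ ↦ by positivity) (alarmProb_mem_Icc hq)
  D_sum_one := by
    rw [sum_labelLaw, Finset.sum_const, Finset.card_univ, Fintype.card_option, Fintype.card_fin,
      nsmul_eq_mul, Nat.cast_add_one]
    exact mul_inv_cancel₀ n.cast_add_one_ne_zero
  P := alarmPrediction q
  P_mem := alarmPrediction_mem_Icc hq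
  calibrated i p _ := labelLaw_calibrated <| by
    rw [← Finset.mul_sum, sum_alarmProb_sub_alarmPrediction, mul_zero]

lemma falseAlarmSetting_D_none_le {q : ℝ} (hq : q ∈ Set.Icc 0 1) (b : Bool) :
    (falseAlarmSetting n hq).D (none, b) ≤ (falseAlarmSetting n hq).D (none, true) := by
  cases b
  · simp only [falseAlarmSetting, labelLaw, alarmProb, Bool.false_eq_true, if_true, if_false]
    gcongr
    norm_num
  · exact le_rfl

lemma falseAlarmSetting_D_some_lt {q : ℝ} (hq : q ∈ Set.Icc 0 1) (hq_lt : q < 1 / 2) (j : Fin n) :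
    (falseAlarmSetting n hq).D (some j, true) < (falseAlarmSetting n hq).D (some j, false) := by
  simp only [falseAlarmSetting, labelLaw, alarmProb, Bool.false_eq_true, if_true, if_false]
  gcongr
  linarith

theorem accStrat_falseAlarmSetting_lt_accAgent [Nontrivial (Fin n)] {q : ℝ}
    (hq : q ∈ Set.Icc 0 1) (hq_lt : q < 1 / 2) {C : (Fin n → ℝ) → Bool}
    (hC : ∀ j, C (loneAlarm q j) = true) (i : Fin n) :
    accStrat (falseAlarmSetting n hq) C < accAgent (falseAlarmSetting n hq) i := by
  have hhigh : rnd ((1 + q) / 2) = true := rnd_eq_true_iff.2 (by linarith [hq.1])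
  have hlow : rnd q = false := rnd_eq_false_iff.2 hq_lt
  have hstrat (j : Fin n) : C (fun i ↦ alarmPrediction q i (some j)) = true := hC j
  have hlt {j : Fin n} (hij : i ≠ j) :
      (falseAlarmSetting n hq).D (some j, C fun i ↦ alarmPrediction q i (some j))
        < (falseAlarmSetting n hq).D (some j, rnd (alarmPrediction q i (some j))) := by
    rw [hstrat, alarmPrediction_some_of_ne q hij, hlow]
    exact falseAlarmSetting_D_some_lt hq hq_lt j
  obtain ⟨j, hji⟩ := exists_ne i
  refine acc_lt_acc (fun x ↦ ?_) ⟨some j, hlt hji.symm⟩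
  change (falseAlarmSetting n hq).D (x, C fun i ↦ alarmPrediction q i x)
    ≤ (falseAlarmSetting n hq).D (x, rnd (alarmPrediction q i x))
  rcases x with _ | j
  · rw [alarmPrediction_none, hhigh]
    exact falseAlarmSetting_D_none_le hq _
  · rcases eq_or_ne i j with rfl | hij
    · rw [hstrat, alarmPrediction_some_self, hhigh]
    · exact (hlt hij).le

end FalseAlarm

section Averaging

variable {n : ℕ}

lemma sum_loneAlarm (q : ℝ) (j : Fin n) :
    ∑ i, loneAlarm q j i = (1 + q) / 2 + (n - 1) * q := by
  rw [loneAlarm, Finset.sum_update_of_mem (Finset.mem_univ j), Finset.sum_const, nsmul_eq_mul,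
    Finset.card_univ_sdiff, Fintype.card_fin, Finset.card_singleton, Nat.cast_pred j.pos]

lemma rnd_average_loneAlarm {q : ℝ} (hq : (n - 1 : ℝ) ≤ q * (2 * n - 1)) (j : Fin n) :
    rnd ((∑ i, loneAlarm q j i) / n) = true := by
  have hn : (0 : ℝ) < n := Nat.cast_pos.2 j.pos
  rw [rnd_eq_true_iff, sum_loneAlarm, le_div_iff₀ hn]
  linarith

end Averaging

/-- The averaging collaboration strategy is not reliable. -/
theorem stmt_13 (n : ℕ) (hn : 2 ≤ n) :
    ∃ S : CollabSetting n,
      accStrat S (fun p => rnd ((∑ i, p i) / n)) < ⨅ i : Fin n, accAgent S i := by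
  let q : ℝ := n / (2 * n + 1)
  have hq_lt : q < 1 / 2 := by
    rw [div_lt_div_iff₀ (by positivity) two_pos]
    linarith
  have hq : q ∈ Set.Icc 0 1 := ⟨by positivity, by linarith⟩
  have hq_near : (n - 1 : ℝ) ≤ q * (2 * n - 1) := by
    rw [div_mul_eq_mul_div, le_div_iff₀ (by positivity)]
    linarith
  have : Nontrivial (Fin n) := Fin.nontrivial_iff_two_le.2 hn
  refine ⟨falseAlarmSetting n hq, ?_⟩
  obtain ⟨i, hi⟩ := exists_eq_ciInf_of_finite (f := accAgent (falseAlarmSetting n hq))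
  rw [← hi]
  exact accStrat_falseAlarmSetting_lt_accAgent hq hq_lt (rnd_average_loneAlarm hq_near) i
end

section
/- Let n ≥ 3 be odd and define the majority-vote collaboration strategy C : [0,1]^n → {0,1} by C(p_1, …, p_n) = 1 if |{i ∈ [n] : round(p_i) = 1}| > n/2, and C(p_1, …, p_n) = 0 otherwise. Then C is not reliable: there exists a collaboration setting S such that acc_C(S) < min_{i∈[n]} acc_i(S). -/
/-!
Toss a fair coin `Y`. If `Y = 1`, one of the `n` agents, chosen uniformly, is told so; everybody
else learns only that they were not told. An agent who is told predicts `1`, and any other agent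
predicts `(n - 1) / (2 n - 1) < 1 / 2`, the conditional probability of `Y = 1`. Each agent is thus
right with probability `1 / 2 + 1 / (2 n)`, yet never more than one agent votes for `1`, so the
majority always answers `0` and is right with probability `1 / 2` only.
-/

open Finset

section PrivateSignal

variable {n : ℕ}

/-- The joint distribution of the private-signal setting: the instance `none` (nobody is told,
label `0`) has mass `1 / 2`, and each instance `some j` (agent `j` is told, label `1`) has mass
`1 / (2 n)`. -/
noncomputable def privateSignalMass (n : ℕ) : Option (Fin n) × Bool → ℝ
  | (none, false) => 1 / 2
  | (some _, true) => 1 / (2 * n)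
  | _ => 0

/-- The conditional probability of label `1` for an agent who is not told in the private-signal
setting. -/
noncomputable def untoldPrediction (n : ℕ) : ℝ := (n - 1) / (2 * n - 1)

/-- The predictor of agent `i` in the private-signal setting: `1` on the instance where `i` is told
the label, and `untoldPrediction n` on all others. -/
noncomputable def privateSignalPredictor (i : Fin n) (x : Option (Fin n)) : ℝ :=
  if x = some i then 1 else untoldPrediction n

theorem privateSignalMass_nonneg (z : Option (Fin n) × Bool) : 0 ≤ privateSignalMass n z := by
  rcases z with ⟨_ | _, _ | _⟩ <;> simp only [privateSignalMass] <;> positivity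

theorem sum_ite_privateSignalMass (E : Option (Fin n) × Bool → Prop) [DecidablePred E] :
    ∑ z, (if E z then privateSignalMass n z else 0) =
      (if E (none, false) then 1 / 2 else 0) + #{j | E (some j, true)} * (1 / (2 * n)) := by
  simp only [Fintype.sum_prod_type, Fintype.sum_option, Fintype.sum_bool, privateSignalMass,
    ite_self, zero_add, add_zero]
  rw [← sum_filter, sum_const, nsmul_eq_mul]

theorem sum_privateSignalMass [NeZero n] : ∑ z, privateSignalMass n z = 1 := by
  have hn : (n : ℝ) ≠ 0 := NeZero.ne _
  have total := sum_ite_privateSignalMass (n := n) fun _ => True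
  simp only [if_true, filter_true, card_univ, Fintype.card_fin] at total
  rw [total]
  field_simp
  norm_num

theorem untoldPrediction_nonneg [NeZero n] : 0 ≤ untoldPrediction n := by
  have hn : (1 : ℝ) ≤ n := mod_cast NeZero.one_le
  exact div_nonneg (by linarith) (by linarith)

theorem untoldPrediction_lt_half [NeZero n] : untoldPrediction n < 1 / 2 := by
  have hn : (1 : ℝ) ≤ n := mod_cast NeZero.one_le
  rw [untoldPrediction, div_lt_div_iff₀ (by linarith) two_pos]
  linarith

theorem privateSignalPredictor_mem_Icc [NeZero n] (i : Fin n) (x : Option (Fin n)) :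
    privateSignalPredictor i x ∈ Set.Icc 0 1 := by
  have hq := untoldPrediction_lt_half (n := n)
  unfold privateSignalPredictor
  split_ifs
  · exact ⟨zero_le_one, le_rfl⟩
  · exact ⟨untoldPrediction_nonneg, by linarith⟩

theorem privateSignalPredictor_eq_one_iff [NeZero n] {i : Fin n} {x : Option (Fin n)} :
    privateSignalPredictor i x = 1 ↔ x = some i := by
  have hq : untoldPrediction n ≠ 1 := by linarith [untoldPrediction_lt_half (n := n)]
  simp [privateSignalPredictor, hq]

theorem privateSignalPredictor_eq_untoldPrediction_iff [NeZero n] {i : Fin n}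
    {x : Option (Fin n)} : privateSignalPredictor i x = untoldPrediction n ↔ x ≠ some i := by
  have hq : 1 ≠ untoldPrediction n := by linarith [untoldPrediction_lt_half (n := n)]
  simp [privateSignalPredictor, hq]

theorem rnd_privateSignalPredictor [NeZero n] (i : Fin n) (x : Option (Fin n)) :
    rnd (privateSignalPredictor i x) = decide (x = some i) := by
  have hq := untoldPrediction_lt_half (n := n)
  by_cases hx : x = some i
  · simp only [rnd, privateSignalPredictor, hx, if_true, decide_true]
    norm_num
  · simp only [rnd, privateSignalPredictor, hx, if_false, hq.not_ge, decide_false]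

theorem card_votes_privateSignalPredictor_le_one [NeZero n] (x : Option (Fin n)) :
    #{i | rnd (privateSignalPredictor i x) = true} ≤ 1 := by
  simp only [rnd_privateSignalPredictor, decide_eq_true_eq, card_le_one, mem_filter_univ]
  exact fun i hi j hj => Option.some.inj (hi.symm.trans hj)

theorem privateSignalPredictor_calibrated_one [NeZero n] (i : Fin n) :
    ∑ z : Option (Fin n) × Bool,
        (if privateSignalPredictor i z.1 = 1 ∧ z.2 = true then privateSignalMass n z else 0) =
      ∑ z : Option (Fin n) × Bool,
        if privateSignalPredictor i z.1 = 1 then privateSignalMass n z else 0 := by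
  simp [sum_ite_privateSignalMass, privateSignalPredictor_eq_one_iff]

theorem privateSignalPredictor_calibrated_untoldPrediction [NeZero n] (i : Fin n) :
    ∑ z : Option (Fin n) × Bool, (if privateSignalPredictor i z.1 = untoldPrediction n ∧
        z.2 = true then privateSignalMass n z else 0) =
      untoldPrediction n * ∑ z : Option (Fin n) × Bool,
        if privateSignalPredictor i z.1 = untoldPrediction n then privateSignalMass n z else 0 := by
  have hn : (1 : ℝ) ≤ n := mod_cast NeZero.one_le
  have card_untold : (#{j : Fin n | j ≠ i} : ℝ) = n - 1 := by
    simp [filter_ne', NeZero.one_le]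
  have posterior : untoldPrediction n * (2 * n - 1) = n - 1 :=
    div_mul_cancel₀ _ (by linarith)
  simp only [sum_ite_privateSignalMass, privateSignalPredictor_eq_untoldPrediction_iff, ne_eq,
    reduceCtorEq, not_false_eq_true, Bool.false_eq_true, and_false, and_true, if_true, if_false,
    Option.some.injEq, zero_add] at card_untold ⊢
  rw [card_untold]
  field_simp
  linarith

/-- The private-signal setting, in which at most one agent ever votes for `1` although the label is
`1` with probability `1 / 2`. -/
noncomputable def privateSignalSetting (n : ℕ) [NeZero n] : CollabSetting n where
  X := Option (Fin n)
  D := privateSignalMass n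
  D_nonneg := privateSignalMass_nonneg
  D_sum_one := sum_privateSignalMass
  P := privateSignalPredictor
  P_mem := privateSignalPredictor_mem_Icc
  calibrated i p hp := by
    obtain ⟨z, -, hz⟩ := exists_ne_zero_of_sum_ne_zero hp.ne'
    obtain rfl : privateSignalPredictor i z.1 = p := of_not_not fun h => hz (if_neg h)
    by_cases told : z.1 = some i
    · rw [privateSignalPredictor_eq_one_iff.2 told, one_mul]
      exact privateSignalPredictor_calibrated_one i
    · rw [privateSignalPredictor_eq_untoldPrediction_iff.2 told]
      exact privateSignalPredictor_calibrated_untoldPrediction i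

theorem acc_privateSignalSetting [NeZero n] (Yhat : Option (Fin n) → Bool) :
    acc (privateSignalSetting n) Yhat =
      (if Yhat none = false then 1 / 2 else 0) + #{j | Yhat (some j) = true} * (1 / (2 * n)) :=
  sum_ite_privateSignalMass fun z => Yhat z.1 = z.2

theorem accAgent_privateSignalSetting [NeZero n] (i : Fin n) :
    accAgent (privateSignalSetting n) i = 1 / 2 + 1 / (2 * n) := by
  refine (acc_privateSignalSetting fun x => rnd (privateSignalPredictor i x)).trans ?_
  simp [rnd_privateSignalPredictor, filter_eq']

theorem accStrat_privateSignalSetting [NeZero n] {C : (Fin n → ℝ) → Bool}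
    (hC : ∀ p : Fin n → ℝ, #{i | rnd (p i) = true} ≤ 1 → C p = false) :
    accStrat (privateSignalSetting n) C = 1 / 2 := by
  have rejects (x : Option (Fin n)) : C (fun i => privateSignalPredictor i x) = false :=
    hC _ (card_votes_privateSignalPredictor_le_one x)
  refine (acc_privateSignalSetting fun x => C fun i => privateSignalPredictor i x).trans ?_
  simp [rejects]

end PrivateSignal

theorem stmt_14_general {n : ℕ} [NeZero n] (C : (Fin n → ℝ) → Bool)
    (hC : ∀ p : Fin n → ℝ, #{i | rnd (p i) = true} ≤ 1 → C p = false) :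
    ∃ S : CollabSetting n, accStrat S C < ⨅ i : Fin n, accAgent S i := by
  refine ⟨privateSignalSetting n, ?_⟩
  simp only [accStrat_privateSignalSetting hC, accAgent_privateSignalSetting, ciInf_const]
  have hn : (0 : ℝ) < n := mod_cast NeZero.pos n
  exact lt_add_of_pos_right _ (by positivity)

/-- The majority-vote collaboration strategy is not reliable. -/
theorem stmt_14 (n : ℕ) (hn : 3 ≤ n) (hodd : Odd n) (C : (Fin n → ℝ) → Bool)
    (hC : ∀ p : Fin n → ℝ,
      C p = decide (n < 2 * ((Finset.univ.filter fun i : Fin n => rnd (p i) = true).card))) :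
    ∃ S : CollabSetting n, accStrat S C < ⨅ i : Fin n, accAgent S i := by
  have : NeZero n := ⟨by omega⟩
  exact stmt_14_general C fun p hp => by rw [hC, decide_eq_false_iff_not]; omega
end

section
/- Let n ≥ 2 and define the most-confident collaboration strategy C : [0,1]^n → {0,1} by C(p_1, …, p_n) = round(p_{i*}), where i* is the smallest index i ∈ [n] maximizing |p_i − 1/2|. Then C is not reliable: there exists a collaboration setting S such that acc_C(S) < min_{i∈[n]} acc_i(S). -/
open Finset

/-!
Split the agents into two nonempty groups, each sharing a binary signal that it reports as a
prediction `a < 1/2` or `b ≥ 1/2`, where `b` is the more confident of the two. Let the label be `1`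
exactly when the signals agree. On a disagreement the confident group votes `1` and is always wrong,
while each group taken alone is wrong on only one of the two kinds of disagreement. If every
disagreement has mass `1`, calibration forces the agreements on `a` and `b` to have as masses the
odds of `a` and of `b`. So a single agent is right on mass `1 + odds b`, and the most confident
strategy on at most `odds a + odds b`, which is smaller because `odds a < 1`.
-/

theorem exists_first_max {ι α : Type*} [LinearOrder ι] [Finite ι] [Nonempty ι] [LinearOrder α]
    (f : ι → α) : ∃ i, (∀ j, f j ≤ f i) ∧ ∀ j < i, f j < f i := by
  obtain ⟨i, hi⟩ := exists_minimal_of_wellFoundedLT (fun i ↦ ∀ j, f j ≤ f i) (Finite.exists_max f)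
  refine ⟨i, hi.prop, fun j hj ↦ lt_of_not_ge fun h ↦ hi.not_prop_of_lt hj fun k ↦ ?_⟩
  exact (hi.prop k).trans h

theorem sum_ite_div_zero {ι K : Type*} [Fintype ι] [DivisionSemiring K] (q : ι → Prop)
    [DecidablePred q] (f : ι → K) (c : K) :
    (∑ i, if q i then f i / c else 0) = (∑ i, if q i then f i else 0) / c := by
  simp only [sum_div, ite_div, zero_div]

/-- The odds `p / (1 - p)` of an event of probability `p`: the mass of positive labels which, added
to a unit mass of negative ones, makes `p` a calibrated prediction. Junk value `0` at `p = 1`. -/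
noncomputable def odds (p : ℝ) : ℝ := p / (1 - p)

theorem odds_nonneg {p : ℝ} (hp : p ∈ Set.Ico 0 1) : 0 ≤ odds p :=
  div_nonneg hp.1 (sub_nonneg.2 hp.2.le)

theorem odds_lt_one {p : ℝ} (hp : p < 1 / 2) : odds p < 1 := by
  rw [odds, div_lt_one (by linarith)]
  linarith

theorem odds_eq_mul_one_add_odds {p : ℝ} (hp : p ≠ 1) : odds p = p * (1 + odds p) := by
  have : 1 - p ≠ 0 := sub_ne_zero.2 hp.symm
  rw [odds]
  field_simp
  ring

/-- The joint mass, before normalisation, of a pair of signals, one for each of two groups of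
agents, and a label. The label is `true` exactly when the signals agree. -/
noncomputable def splitWeight (a b : ℝ) : (Bool × Bool) × Bool → ℝ
  | ((true, true), true) => odds b
  | ((false, false), true) => odds a
  | ((true, false), false) => 1
  | ((false, true), false) => 1
  | _ => 0

/-- The predictions made on a pair of signals when the agents in `s` see the first signal and all
others the second; the signal `true` is reported as `b` and `false` as `a`. -/
def splitPrediction {n : ℕ} (s : Finset (Fin n)) (a b : ℝ) (x : Bool × Bool) (i : Fin n) : ℝ :=
  bif (if i ∈ s then x.1 else x.2) then b else a

theorem splitWeight_nonneg {a b : ℝ} (ha : a ∈ Set.Ico 0 1) (hb : b ∈ Set.Ico 0 1)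
    (z : (Bool × Bool) × Bool) : 0 ≤ splitWeight a b z := by
  rcases z with ⟨⟨_ | _, _ | _⟩, _ | _⟩ <;> simp [splitWeight, odds_nonneg, ha, hb]

theorem sum_splitWeight (a b : ℝ) : ∑ z, splitWeight a b z = 2 + odds a + odds b := by
  simp only [Fintype.sum_prod_type, Fintype.sum_bool, splitWeight]
  ring

theorem splitPrediction_mem {n : ℕ} (s : Finset (Fin n)) {a b : ℝ} {t : Set ℝ} (ha : a ∈ t)
    (hb : b ∈ t) (x : Bool × Bool) (i : Fin n) : splitPrediction s a b x i ∈ t := by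
  unfold splitPrediction
  cases (if i ∈ s then x.1 else x.2) <;> assumption

theorem splitWeight_calibrated {n : ℕ} (s : Finset (Fin n)) {a b : ℝ} (ha : a ≠ 1) (hb : b ≠ 1)
    (i : Fin n) (p : ℝ) :
    (∑ z, if splitPrediction s a b z.1 i = p ∧ z.2 = true then splitWeight a b z else 0) =
      p * ∑ z, if splitPrediction s a b z.1 i = p then splitWeight a b z else 0 := by
  have calibrated_at {q : ℝ} (hq : q ≠ 1) :
      (if q = p then odds q else 0) = p * if q = p then 1 + odds q else 0 := by
    split_ifs with h
    · rw [← h, ← odds_eq_mul_one_add_odds hq]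
    · rw [mul_zero]
  have positive_mass :
      (∑ z, if splitPrediction s a b z.1 i = p ∧ z.2 = true then splitWeight a b z else 0) =
        (if a = p then odds a else 0) + if b = p then odds b else 0 := by
    by_cases hi : i ∈ s <;>
      simp [Fintype.sum_prod_type, splitWeight, splitPrediction, hi, add_comm]
  have total_mass :
      (∑ z, if splitPrediction s a b z.1 i = p then splitWeight a b z else 0) =
        (if a = p then 1 + odds a else 0) + if b = p then 1 + odds b else 0 := by
    by_cases hi : i ∈ s <;>
      simp only [Fintype.sum_prod_type, Fintype.sum_bool, splitWeight, splitPrediction, hi,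
        if_true, if_false, cond_true, cond_false] <;>
      split_ifs <;> ring
  rw [positive_mass, total_mass, calibrated_at ha, calibrated_at hb, mul_add]

/-- The collaboration setting in which two groups of agents, `s` and its complement, each share a
signal and the label says whether the signals agree, with masses chosen to make the predictions
`a` and `b` calibrated. -/
noncomputable def splitSetting {n : ℕ} (s : Finset (Fin n)) {a b : ℝ} (ha : a ∈ Set.Ico 0 1)
    (hb : b ∈ Set.Ico 0 1) : CollabSetting n where
  X := Bool × Bool
  D z := splitWeight a b z / ∑ z, splitWeight a b z
  D_nonneg z := div_nonneg (splitWeight_nonneg ha hb z)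
    (sum_nonneg fun z _ ↦ splitWeight_nonneg ha hb z)
  D_sum_one := by
    have := odds_nonneg ha
    have := odds_nonneg hb
    rw [← sum_div, div_self]
    rw [sum_splitWeight]
    positivity
  P i x := splitPrediction s a b x i
  P_mem i x := splitPrediction_mem s (Set.Ico_subset_Icc_self ha) (Set.Ico_subset_Icc_self hb) x i
  calibrated i p _ := by
    rw [sum_ite_div_zero, sum_ite_div_zero, splitWeight_calibrated s ha.2.ne hb.2.ne,
      mul_div_assoc]

section SplitSetting

variable {n : ℕ} (s : Finset (Fin n)) {a b : ℝ} (ha : a ∈ Set.Ico 0 1) (hb : b ∈ Set.Ico 0 1)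

theorem acc_splitSetting (f : Bool × Bool → Bool) :
    acc (splitSetting s ha hb) f =
      (∑ z, if f z.1 = z.2 then splitWeight a b z else 0) / (2 + odds a + odds b) := by
  rw [← sum_splitWeight]
  exact sum_ite_div_zero (fun z : (Bool × Bool) × Bool ↦ f z.1 = z.2) _ _

theorem accAgent_splitSetting (ha' : a < 1 / 2) (hb' : 1 / 2 ≤ b) (i : Fin n) :
    accAgent (splitSetting s ha hb) i = (1 + odds b) / (2 + odds a + odds b) := by
  have rnd_a : rnd a = false := if_neg ha'.not_ge
  have rnd_b : rnd b = true := if_pos hb'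
  refine (acc_splitSetting s ha hb fun x ↦ rnd (splitPrediction s a b x i)).trans ?_
  by_cases hi : i ∈ s <;>
    simp [Fintype.sum_prod_type, splitWeight, splitPrediction, hi, rnd_a, rnd_b,
      add_comm]

theorem accStrat_splitSetting_le {C : (Fin n → ℝ) → Bool}
    (hC : ∀ u, C (splitPrediction s a b (u, !u)) = true) :
    accStrat (splitSetting s ha hb) C ≤ (odds a + odds b) / (2 + odds a + odds b) := by
  have odds_a := odds_nonneg ha
  have odds_b := odds_nonneg hb
  refine (acc_splitSetting s ha hb fun x ↦ C (splitPrediction s a b x)).trans_le ?_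
  gcongr
  have wrong_true_false : C (splitPrediction s a b (true, false)) ≠ false :=
    (hC true).trans_ne (by decide)
  have wrong_false_true : C (splitPrediction s a b (false, true)) ≠ false :=
    (hC false).trans_ne (by decide)
  have right_le {q : Prop} [Decidable q] {w : ℝ} (hw : 0 ≤ w) : (if q then w else 0) ≤ w :=
    (ite_le_sup _ _ _).trans_eq (sup_eq_left.2 hw)
  simp only [Fintype.sum_prod_type, Fintype.sum_bool, splitWeight, wrong_true_false,
    wrong_false_true, reduceCtorEq, if_false, ite_self, add_zero, zero_add]
  rw [add_comm (odds a)]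
  exact add_le_add (right_le odds_b) (right_le odds_a)

theorem accStrat_splitSetting_lt_accAgent (ha' : a < 1 / 2) (hb' : 1 / 2 ≤ b)
    {C : (Fin n → ℝ) → Bool} (hC : ∀ u, C (splitPrediction s a b (u, !u)) = true) (i : Fin n) :
    accStrat (splitSetting s ha hb) C < accAgent (splitSetting s ha hb) i := by
  have odds_a := odds_nonneg ha
  have odds_b := odds_nonneg hb
  calc accStrat (splitSetting s ha hb) C
      ≤ (odds a + odds b) / (2 + odds a + odds b) := accStrat_splitSetting_le s ha hb hC
    _ < (1 + odds b) / (2 + odds a + odds b) := by gcongr; exact odds_lt_one ha'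
    _ = accAgent (splitSetting s ha hb) i := (accAgent_splitSetting s ha hb ha' hb' i).symm

end SplitSetting

/-- `C` rounds the prediction of some most confident agent, with no condition on how ties between
equally confident agents are broken. -/
def FollowsMostConfident {n : ℕ} (C : (Fin n → ℝ) → Bool) : Prop :=
  ∀ p : Fin n → ℝ, ∃ i, (∀ j, |p j - 1 / 2| ≤ |p i - 1 / 2|) ∧ C p = rnd (p i)

theorem FollowsMostConfident.eq_true {n : ℕ} {C : (Fin n → ℝ) → Bool} (hC : FollowsMostConfident C)
    {a b : ℝ} (hab : |a - 1 / 2| < |b - 1 / 2|) (hb : 1 / 2 ≤ b) {p : Fin n → ℝ}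
    (hp : ∀ i, p i = a ∨ p i = b) (hpb : ∃ i, p i = b) : C p = true := by
  obtain ⟨i, hmax, hCp⟩ := hC p
  obtain ⟨j, hj⟩ := hpb
  have hi : p i = b := (hp i).resolve_left fun hi ↦ (hi ▸ hj ▸ hmax j).not_gt hab
  rw [hCp, hi]
  exact if_pos hb

theorem FollowsMostConfident.splitPrediction_eq_true {n : ℕ} {C : (Fin n → ℝ) → Bool}
    (hC : FollowsMostConfident C) {a b : ℝ} (hab : |a - 1 / 2| < |b - 1 / 2|) (hb : 1 / 2 ≤ b)
    {s : Finset (Fin n)} (hs : ∃ i, i ∈ s) (hs' : ∃ i, i ∉ s) (u : Bool) :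
    C (splitPrediction s a b (u, !u)) = true := by
  refine hC.eq_true hab hb (splitPrediction_mem s (t := {a, b}) (.inl rfl) (.inr rfl) _) ?_
  obtain ⟨i, hi⟩ := hs
  obtain ⟨j, hj⟩ := hs'
  cases u
  · exact ⟨j, by simp [splitPrediction, hj]⟩
  · exact ⟨i, by simp [splitPrediction, hi]⟩

theorem stmt_15_general (n : ℕ) (hn : 2 ≤ n) (C : (Fin n → ℝ) → Bool)
    (hC : FollowsMostConfident C) :
    ∃ S : CollabSetting n, accStrat S C < ⨅ i : Fin n, accAgent S i := by
  have : Nontrivial (Fin n) := Fin.nontrivial_iff_two_le.2 hn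
  obtain ⟨i, j, hij⟩ := exists_pair_ne (Fin n)
  have split := hC.splitPrediction_eq_true (a := 1 / 3) (b := 3 / 4) (s := {i})
    (by norm_num [abs_of_neg, abs_of_pos]) (by norm_num) ⟨i, by simp⟩ ⟨j, by simpa using hij.symm⟩
  have lt_accAgent := accStrat_splitSetting_lt_accAgent {i} (by norm_num) (by norm_num)
    (by norm_num) (by norm_num) split
  obtain ⟨k, hk⟩ := exists_eq_ciInf_of_finite (f := accAgent (splitSetting {i} _ _))
  exact ⟨_, hk ▸ lt_accAgent k⟩

/-- The most-confident collaboration strategy (deferring to the smallest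
index maximizing the distance of the prediction from 1/2) is not reliable. -/
theorem stmt_15 (n : ℕ) (hn : 2 ≤ n) (C : (Fin n → ℝ) → Bool)
    (hC : ∀ (p : Fin n → ℝ) (istar : Fin n),
      (∀ j, |p j - 1/2| ≤ |p istar - 1/2|) →
      (∀ j, j < istar → |p j - 1/2| < |p istar - 1/2|) →
      C p = rnd (p istar)) :
    ∃ S : CollabSetting n, accStrat S C < ⨅ i : Fin n, accAgent S i := by
  have : NeZero n := ⟨by omega⟩
  refine stmt_15_general n hn C fun p ↦ ?_
  obtain ⟨i, hmax, hfirst⟩ := exists_first_max fun j ↦ |p j - 1 / 2|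
  exact ⟨i, hmax, hC p i hmax hfirst⟩
end
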